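/- arXiv:2401.00612 — 4 statements merged into one kernel-verified Lean document; each statement's English description precedes it below -/
import Mathlib

section
/- Let (ε_n)_{n=1}^∞ be a sequence of nonnegative real numbers with Σ_{n=1}^∞ ε_n < ∞. Then every normalized (1+ε_n)-bounded M-basis {x_n, x_n*}_{n∈ℕ} of the real Hilbert space ℓ² is equivalent to an orthonormal basis of ℓ²; that is, there exists a bounded invertible linear operator T on ℓ² with T e_n = x_n for all n, where (e_n) is the standard orthonormal basis. -/
open scoped BigOperators

section RieszBasis

variable {ι H : Type*} [NormedAddCommGroup H] [InnerProductSpace ℝ H]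

open scoped InnerProductSpace

/-- The Cauchy-Schwarz bound for a finite linear combination. -/
theorem norm_sum_smul_sq_le (s : Finset ι) (a : ι → ℝ) (d : ι → H) :
    ‖∑ n ∈ s, a n • d n‖ ^ 2 ≤ (∑ n ∈ s, a n ^ 2) * ∑ n ∈ s, ‖d n‖ ^ 2 := by
  calc ‖∑ n ∈ s, a n • d n‖ ^ 2 ≤ (∑ n ∈ s, |a n| * ‖d n‖) ^ 2 := by
        gcongr
        refine (norm_sum_le _ _).trans_eq (Finset.sum_congr rfl fun n _ => ?_)
        rw [norm_smul, Real.norm_eq_abs]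
    _ ≤ (∑ n ∈ s, |a n| ^ 2) * ∑ n ∈ s, ‖d n‖ ^ 2 := Finset.sum_mul_sq_le_sq_mul_sq _ _ _
    _ = _ := by simp only [sq_abs]

/-- If two biorthogonal families are quadratically close, then finite linear combinations of the
first one satisfy two-sided Riesz bounds. -/
theorem riesz_bounds_of_biorthogonal [DecidableEq ι] {x y : ι → H} {C : ℝ}
    (hbi : ∀ m n, ⟪y m, x n⟫_ℝ = if m = n then 1 else 0)
    (hC : ∀ s : Finset ι, ∑ n ∈ s, ‖x n - y n‖ ^ 2 ≤ C) (s : Finset ι) (a : ι → ℝ) :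
    ‖∑ n ∈ s, a n • x n‖ ^ 2 ≤ (C + 2) * ∑ n ∈ s, a n ^ 2 ∧
      ∑ n ∈ s, a n ^ 2 ≤ (C + 2) * ‖∑ n ∈ s, a n • x n‖ ^ 2 := by
  set u := ∑ n ∈ s, a n • x n with hu
  set v := ∑ n ∈ s, a n • y n with hv
  set A := ∑ n ∈ s, a n ^ 2 with hA
  have hA0 : 0 ≤ A := Finset.sum_nonneg fun n _ => sq_nonneg _
  have hC0 : 0 ≤ C := by simpa using hC ∅
  have hvu : ⟪v, u⟫_ℝ = A := by
    rw [hv, hu, hA, sum_inner]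
    refine Finset.sum_congr rfl fun n hn => ?_
    simp [inner_sum, inner_smul_left, inner_smul_right, hbi, hn, sq]
  have hd : ‖u - v‖ ^ 2 ≤ A * C := by
    have h := norm_sum_smul_sq_le s a fun n => x n - y n
    simp only [smul_sub, Finset.sum_sub_distrib] at h
    exact h.trans (mul_le_mul_of_nonneg_left (hC s) hA0)
  rw [norm_sub_sq_real, real_inner_comm, hvu] at hd
  refine ⟨by nlinarith [sq_nonneg ‖v‖], ?_⟩
  have hcs : A ≤ ‖v‖ * ‖u‖ := hvu ▸ real_inner_le_norm v u
  have hsq : A * A ≤ A * ((C + 2) * ‖u‖ ^ 2) := by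
    calc A * A ≤ (‖v‖ * ‖u‖) * (‖v‖ * ‖u‖) := mul_self_le_mul_self hA0 hcs
      _ = ‖v‖ ^ 2 * ‖u‖ ^ 2 := by ring
      _ ≤ (A * (C + 2)) * ‖u‖ ^ 2 := by gcongr; nlinarith [sq_nonneg ‖u‖]
      _ = _ := by ring
  rcases hA0.eq_or_lt with h | h
  · rw [← h]; positivity
  · exact le_of_mul_le_mul_left hsq h

/-- A complete sequence satisfying two-sided Riesz bounds on finite linear combinations is the
image of the standard basis of `ℓ²` under an isomorphism. -/
theorem exists_continuousLinearEquiv_of_riesz_bounds [DecidableEq ι] [CompleteSpace H] {x : ι → H}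
    {K : ℝ} (hK : 0 < K)
    (hspan : (Submodule.span ℝ (Set.range x)).topologicalClosure = ⊤)
    (hupper : ∀ (s : Finset ι) (a : ι → ℝ),
      ‖∑ n ∈ s, a n • x n‖ ^ 2 ≤ K * ∑ n ∈ s, a n ^ 2)
    (hlower : ∀ (s : Finset ι) (a : ι → ℝ),
      ∑ n ∈ s, a n ^ 2 ≤ K * ‖∑ n ∈ s, a n • x n‖ ^ 2) :
    ∃ T : lp (fun _ : ι => ℝ) 2 ≃L[ℝ] H, ∀ n, T (lp.single 2 n 1) = x n := by
  have hsq (a : lp (fun _ : ι => ℝ) 2) : HasSum (fun n => a n ^ 2) (‖a‖ ^ 2) := by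
    simpa using lp.hasSum_norm (p := 2) (by norm_num) a
  have hsummable (a : lp (fun _ : ι => ℝ) 2) : Summable fun n => a n • x n := by
    rw [summable_iff_vanishing_norm]
    intro δ hδ
    obtain ⟨s, hs⟩ := summable_iff_vanishing_norm.1 (hsq a).summable (δ ^ 2 / K) (by positivity)
    refine ⟨s, fun t ht => lt_of_pow_lt_pow_left₀ 2 hδ.le ((hupper t a).trans_lt ?_)⟩
    rw [mul_comm, ← lt_div_iff₀ hK]
    exact (le_abs_self _).trans_lt (hs t ht)
  have htendsto (a : lp (fun _ : ι => ℝ) 2) := ((hsummable a).hasSum.norm.pow 2).const_mul K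
  let L : lp (fun _ : ι => ℝ) 2 →ₗ[ℝ] H :=
    { toFun := fun a => ∑' n, a n • x n
      map_add' := fun a b => by
        rw [← (hsummable a).tsum_add (hsummable b)]
        exact tsum_congr fun n => by simp [add_smul]
      map_smul' := fun c a => by
        rw [RingHom.id_apply, ← (hsummable a).tsum_const_smul]
        exact tsum_congr fun n => by simp [mul_smul] }
  have hLup (a : lp (fun _ : ι => ℝ) 2) : ‖L a‖ ≤ √K * ‖a‖ := by
    refine le_of_sq_le_sq ?_ (by positivity)
    rw [mul_pow, Real.sq_sqrt hK.le]
    exact le_of_tendsto_of_tendsto' ((hsummable a).hasSum.norm.pow 2) ((hsq a).const_mul K)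
      fun s => hupper s a
  have hLlow (a : lp (fun _ : ι => ℝ) 2) : ‖a‖ ≤ √K * ‖L a‖ := by
    refine le_of_sq_le_sq ?_ (by positivity)
    rw [mul_pow, Real.sq_sqrt hK.le]
    exact le_of_tendsto_of_tendsto' (hsq a) (htendsto a) fun s => hlower s a
  let T := L.mkContinuous (√K) hLup
  have hT (n : ι) : T (lp.single 2 n 1) = x n := by
    change ∑' m, _ = _
    rw [tsum_eq_single n fun m hm => by simp [hm]]
    simp
  have hanti : AntilipschitzWith (Real.toNNReal √K) T :=
    T.antilipschitz_of_bound fun a => by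
      rw [Real.coe_toNNReal _ (Real.sqrt_nonneg K)]; exact hLlow a
  have hrange : LinearMap.range (T : lp (fun _ : ι => ℝ) 2 →ₗ[ℝ] H) = ⊤ := by
    rw [eq_top_iff, ← hspan]
    refine Submodule.topologicalClosure_minimal _ (Submodule.span_le.2 ?_)
      (hanti.isClosed_range T.uniformContinuous)
    rintro _ ⟨n, rfl⟩
    exact ⟨_, hT n⟩
  exact ⟨ContinuousLinearEquiv.ofBijective T (LinearMap.ker_eq_bot.2 hanti.injective) hrange, hT⟩

end RieszBasis

/-- If `(ε n)` is nonnegative and summable, then every normalized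
`(1+ε n)`-bounded Markushevich basis of the real Hilbert space `ℓ²` is equivalent to an
orthonormal basis: there is a bounded invertible linear operator `T` on `ℓ²` with
`T eₙ = xₙ` for the standard orthonormal basis `(eₙ)`. -/
theorem summable_eps_imp_bounded_Mbasis_equiv_ONB
    (ε : ℕ → ℝ) (hε : ∀ n, 0 ≤ ε n) (hsum : Summable ε)
    (x : ℕ → lp (fun _ : ℕ => ℝ) 2)
    (xs : ℕ → (lp (fun _ : ℕ => ℝ) 2) →L[ℝ] ℝ)
    (hbi : ∀ m n, xs m (x n) = if m = n then 1 else 0)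
    (hfund : (Submodule.span ℝ (Set.range x)).topologicalClosure = ⊤)
    (htotal : ∀ v : lp (fun _ : ℕ => ℝ) 2, (∀ n, xs n v = 0) → v = 0)
    (hnorm : ∀ n, ‖x n‖ = 1)
    (hbdd : ∀ n, ‖x n‖ * ‖xs n‖ ≤ 1 + ε n) :
    ∃ T : (lp (fun _ : ℕ => ℝ) 2) ≃L[ℝ] (lp (fun _ : ℕ => ℝ) 2),
      ∀ n, T (lp.single 2 n 1) = x n := by
  let y : ℕ → lp (fun _ : ℕ => ℝ) 2 := fun n => (InnerProductSpace.toDual ℝ _).symm (xs n)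
  have hyx (m n : ℕ) : inner ℝ (y m) (x n) = if m = n then 1 else 0 := by
    rw [InnerProductSpace.toDual_symm_apply, hbi]
  have hy (n : ℕ) : ‖y n‖ ≤ 1 + ε n := by
    simpa [y, hnorm n] using hbdd n
  set S := ∑' n, ε n
  have hS : 0 ≤ S := tsum_nonneg hε
  have hdist (n : ℕ) : ‖x n - y n‖ ^ 2 ≤ (2 + S) * ε n := by
    have hle : ε n ≤ S := hsum.le_tsum n fun m _ => hε m
    have hy2 : ‖y n‖ ^ 2 ≤ (1 + ε n) ^ 2 := by gcongr; exact hy n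
    rw [norm_sub_sq_real, real_inner_comm, hyx, hnorm]
    simp only [if_true]
    nlinarith [mul_le_mul_of_nonneg_right hle (hε n)]
  have hC (s : Finset ℕ) : ∑ n ∈ s, ‖x n - y n‖ ^ 2 ≤ (2 + S) * S :=
    calc ∑ n ∈ s, ‖x n - y n‖ ^ 2 ≤ ∑ n ∈ s, (2 + S) * ε n :=
          Finset.sum_le_sum fun n _ => hdist n
      _ = (2 + S) * ∑ n ∈ s, ε n := (Finset.mul_sum _ _ _).symm
      _ ≤ (2 + S) * S := by gcongr; exact hsum.sum_le_tsum s fun n _ => hε n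
  exact exists_continuousLinearEquiv_of_riesz_bounds (by positivity) hfund
    (fun s a => (riesz_bounds_of_biorthogonal hyx hC s a).1)
    (fun s a => (riesz_bounds_of_biorthogonal hyx hC s a).2)
end

section
/- Let (ε_n)_{n=1}^∞ be a sequence of nonnegative real numbers with Σ_{n=1}^∞ ε_n = ∞. Then there exists a (1+ε_n)-bounded M-basis {x_n, x_n*}_{n∈ℕ} of the real Hilbert space ℓ² which is not equivalent to an orthonormal basis of ℓ², i.e., there is no bounded invertible linear operator T on ℓ² with T e_n = x_n for all n, where (e_n) is the standard orthonormal basis. -/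
open scoped BigOperators

/-- A nonnegative divergent series can be cut into consecutive finite blocks, the `k`-th one of sum
at least `(1 + k) ^ 2`; `c j` is the number of the block that contains `j`. -/
theorem exists_blocks_of_not_summable {δ : ℕ → ℝ} (hδ : ∀ n, 0 ≤ δ n) (hdiv : ¬ Summable δ) :
    ∃ (c : ℕ → ℕ) (F : ℕ → Finset ℕ), (∀ j k, j ∈ F k ↔ c j = k) ∧
      ∀ k : ℕ, (1 + k : ℝ) ^ 2 ≤ ∑ j ∈ F k, δ j := by
  have htop := (not_summable_iff_tendsto_nat_atTop_of_nonneg hδ).1 hdiv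
  have hstep : ∀ m k : ℕ, ∃ p, m < p ∧ (1 + k : ℝ) ^ 2 ≤ ∑ j ∈ Finset.Ico m p, δ j := by
    intro m k
    obtain ⟨p, hp, hmp⟩ := ((htop.eventually_ge_atTop
      ((1 + k : ℝ) ^ 2 + ∑ j ∈ Finset.range m, δ j)).and (Filter.eventually_gt_atTop m)).exists
    refine ⟨p, hmp, ?_⟩
    rw [Finset.sum_Ico_eq_sub _ hmp.le]
    linarith
  choose next hlt hsum using hstep
  let a : ℕ → ℕ := fun k => Nat.rec 0 (fun k m => next m k) k
  have ha : StrictMono a := strictMono_nat_of_lt_succ fun k => hlt (a k) k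
  have hex : ∀ j, ∃ k, j < a (k + 1) := fun j => ⟨j, (Nat.lt_succ_self j).trans_le ha.le_apply⟩
  refine ⟨fun j => Nat.find (hex j), fun k => Finset.Ico (a k) (a (k + 1)), fun j k => ?_,
    fun k => hsum (a k) k⟩
  rw [Finset.mem_Ico, Nat.find_eq_iff]
  constructor
  · exact fun ⟨h₁, h₂⟩ => ⟨h₂, fun m hm => not_lt.2 ((ha.monotone hm).trans h₁)⟩
  · rintro ⟨h₂, h⟩
    refine ⟨?_, h₂⟩
    cases k with
    | zero => exact Nat.zero_le j
    | succ k => exact not_lt.1 (h k k.lt_succ_self)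

theorem not_summable_min_one {ε : ℕ → ℝ} (hdiv : ¬ Summable ε) :
    ¬ Summable fun n => min (ε n) 1 := by
  intro h
  refine hdiv ((summable_congr_cofinite ?_).1 h)
  rw [Nat.cofinite_eq_atTop]
  filter_upwards [h.tendsto_atTop_zero.eventually_lt_const one_pos] with n hn
  exact min_eq_left (le_of_lt (by simpa using hn))

/-- Unit vectors `U k` with pairwise disjoint supports `{j | c j = k}`, and entries `u j` that are
small relative to `ε j`. -/
theorem exists_block_unit_vectors {ε : ℕ → ℝ} (hε : ∀ n, 0 ≤ ε n) (hdiv : ¬ Summable ε) :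
    ∃ (c : ℕ → ℕ) (u : ℕ → ℝ) (U : ℕ → lp (fun _ : ℕ => ℝ) 2),
      (∀ k j, U k j = if c j = k then u j else 0) ∧ (∀ k, ‖U k‖ = 1) ∧
      ∀ j, ((1 + c j : ℝ) ^ 2 - 1) * u j ^ 2 ≤ min (ε j) 1 := by
  have hδ : ∀ n, 0 ≤ min (ε n) 1 := fun n => le_min (hε n) zero_le_one
  obtain ⟨c, F, hF, hsum⟩ := exists_blocks_of_not_summable hδ (not_summable_min_one hdiv)
  have hSpos : ∀ k, 0 < ∑ j ∈ F k, min (ε j) 1 := fun k =>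
    lt_of_lt_of_le (by positivity) (hsum k)
  obtain ⟨u, husq⟩ : ∃ u : ℕ → ℝ, ∀ j, u j ^ 2 = min (ε j) 1 / ∑ i ∈ F (c j), min (ε i) 1 :=
    ⟨fun j => √(min (ε j) 1 / ∑ i ∈ F (c j), min (ε i) 1),
      fun j => Real.sq_sqrt (div_nonneg (hδ j) (hSpos _).le)⟩
  refine ⟨c, u, fun k => ∑ i ∈ F k, lp.single 2 i (u i), fun k j => ?_, fun k => ?_, fun j => ?_⟩
  · rw [lp.coeFn_sum, Finset.sum_apply]
    simp [Pi.single_apply, hF]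
  · have h := lp.norm_sum_single (p := 2) (E := fun _ : ℕ => ℝ) (by norm_num) u (F k)
    have hone : ∑ i ∈ F k, ‖u i‖ ^ (2 : ENNReal).toReal = 1 := by
      refine Eq.trans ?_ (div_self (hSpos k).ne')
      rw [Finset.sum_div]
      refine Finset.sum_congr rfl fun i hi => ?_
      rw [ENNReal.toReal_ofNat, Real.rpow_two, Real.norm_eq_abs, sq_abs, husq, (hF i k).1 hi]
    rw [hone, ENNReal.toReal_ofNat, Real.rpow_two] at h
    exact (pow_eq_one_iff_of_nonneg (norm_nonneg _) two_ne_zero).1 h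
  · rw [husq, ← mul_div_assoc, div_le_iff₀ (hSpos _), mul_comm]
    exact mul_le_mul_of_nonneg_left (by linarith [hsum (c j)]) (hδ j)

section BlockPerturbation

variable {c : ℕ → ℕ} {u : ℕ → ℝ} {U : ℕ → lp (fun _ : ℕ => ℝ) 2}

/-- The image of the `j`-th standard unit vector under the block diagonal operator whose `k`-th
block is the rank one perturbation `1 + r k • U k ⊗ U k` of the identity. -/
noncomputable def blockPerturbation (c : ℕ → ℕ) (u : ℕ → ℝ) (U : ℕ → lp (fun _ : ℕ => ℝ) 2)
    (r : ℕ → ℝ) (j : ℕ) : lp (fun _ : ℕ => ℝ) 2 :=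
  lp.single 2 j 1 + (r (c j) * u j) • U (c j)

theorem inner_block_unit_vectors (hU : ∀ k j, U k j = if c j = k then u j else 0)
    (hnorm : ∀ k, ‖U k‖ = 1) (k l : ℕ) : inner ℝ (U k) (U l) = if k = l then (1 : ℝ) else 0 := by
  split_ifs with h
  · rw [h, real_inner_self_eq_norm_sq, hnorm, one_pow]
  · rw [lp.inner_eq_tsum]
    refine (tsum_congr fun j => ?_).trans tsum_zero
    rw [hU, hU]
    by_cases hk : c j = k
    · simp [hk, h]
    · simp [hk]

theorem inner_blockPerturbation (r : ℕ → ℝ) (j : ℕ) (v : lp (fun _ : ℕ => ℝ) 2) :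
    inner ℝ (blockPerturbation c u U r j) v = v j + r (c j) * u j * inner ℝ (U (c j)) v := by
  simp [blockPerturbation, inner_add_left, inner_smul_left, lp.inner_single_left]

theorem inner_blockPerturbation_blockPerturbation
    (hU : ∀ k j, U k j = if c j = k then u j else 0) (hnorm : ∀ k, ‖U k‖ = 1)
    (r s : ℕ → ℝ) (i j : ℕ) :
    inner ℝ (blockPerturbation c u U r i) (blockPerturbation c u U s j) =
      (if i = j then (1 : ℝ) else 0) +
        if c i = c j then u i * u j * (r (c i) + s (c i) + r (c i) * s (c i)) else 0 := by
  rw [inner_blockPerturbation, blockPerturbation, inner_add_right, inner_smul_right,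
    inner_block_unit_vectors hU hnorm, lp.inner_single_right]
  simp only [lp.coeFn_add, lp.coeFn_smul, Pi.add_apply, Pi.smul_apply, lp.single_apply,
    Pi.single_apply, hU, smul_eq_mul]
  by_cases h : c i = c j
  · simp [h]
    ring
  · simp [h, Ne.symm h]

theorem norm_sq_blockPerturbation (hU : ∀ k j, U k j = if c j = k then u j else 0)
    (hnorm : ∀ k, ‖U k‖ = 1) (r : ℕ → ℝ) (j : ℕ) :
    ‖blockPerturbation c u U r j‖ ^ 2 = 1 + ((1 + r (c j)) ^ 2 - 1) * u j ^ 2 := by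
  rw [← real_inner_self_eq_norm_sq, inner_blockPerturbation_blockPerturbation hU hnorm,
    if_pos rfl, if_pos rfl]
  ring

theorem eq_zero_of_inner_blockPerturbation_eq_zero
    (hU : ∀ k j, U k j = if c j = k then u j else 0) (hnorm : ∀ k, ‖U k‖ = 1)
    {r : ℕ → ℝ} (hr : ∀ k, 1 + r k ≠ 0) {v : lp (fun _ : ℕ => ℝ) 2}
    (hv : ∀ j, inner ℝ (blockPerturbation c u U r j) v = 0) : v = 0 := by
  have hvj : ∀ j, v j = -(r (c j) * u j * inner ℝ (U (c j)) v) := fun j => by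
    have h := hv j
    rw [inner_blockPerturbation] at h
    linarith
  have hUv : ∀ k, inner ℝ (U k) v = (0 : ℝ) := by
    intro k
    have h : inner ℝ (U k) v = inner ℝ (U k) ((-(r k * inner ℝ (U k) v)) • U k) := by
      conv_lhs => rw [lp.inner_eq_tsum]
      rw [lp.inner_eq_tsum]
      refine tsum_congr fun j => ?_
      rw [hvj j, lp.coeFn_smul, Pi.smul_apply, hU]
      by_cases hk : c j = k
      · simp only [hk, if_true, smul_eq_mul]
        congr 1
        ring
      · simp [hk]
    rw [inner_smul_right, real_inner_self_eq_norm_sq, hnorm] at h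
    exact (mul_eq_zero.1 (by linear_combination h :
      (1 + r k) * inner ℝ (U k) v = 0)).resolve_left (hr k)
  ext j
  simp [hvj j, hUv]

end BlockPerturbation

/-- A pointwise lower bound on coordinates gives a lower bound on norms in `ℓ²`. -/
theorem lp_two_norm_mul_le {v w : lp (fun _ : ℕ => ℝ) 2} {a : ℝ} (ha : 0 ≤ a)
    (h : ∀ j, a * |v j| ≤ |w j|) : a * ‖v‖ ≤ ‖w‖ := by
  rw [← abs_of_nonneg ha, ← Real.norm_eq_abs, ← norm_smul]
  refine lp.norm_mono (by norm_num) fun j => ?_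
  simpa [abs_mul, abs_of_nonneg ha] using h j

/-- For a nonsummable nonnegative `ε` there is a `(1 + ε n)`-bounded M-basis of `ℓ²` that consists
of unit vectors and is not the image of the standard basis under any bounded operator. -/
theorem exists_normalized_bounded_Mbasis_not_image_ONB
    (ε : ℕ → ℝ) (hε : ∀ n, 0 ≤ ε n) (hdiv : ¬ Summable ε) :
    ∃ (x : ℕ → lp (fun _ : ℕ => ℝ) 2)
      (xs : ℕ → (lp (fun _ : ℕ => ℝ) 2) →L[ℝ] ℝ),
      (∀ m n, xs m (x n) = if m = n then 1 else 0) ∧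
      (Submodule.span ℝ (Set.range x)).topologicalClosure = ⊤ ∧
      (∀ v : lp (fun _ : ℕ => ℝ) 2, (∀ n, xs n v = 0) → v = 0) ∧
      (∀ n, ‖x n‖ = 1) ∧ (∀ n, ‖x n‖ * ‖xs n‖ ≤ 1 + ε n) ∧
      ¬ ∃ T : (lp (fun _ : ℕ => ℝ) 2) →L[ℝ] (lp (fun _ : ℕ => ℝ) 2),
          ∀ n, T (lp.single 2 n 1) = x n := by
  obtain ⟨c, u, U, hU, hnorm, hsmall⟩ := exists_block_unit_vectors hε hdiv
  let r : ℕ → ℝ := fun k => k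
  let s : ℕ → ℝ := fun k => (1 + k : ℝ)⁻¹ - 1
  let y := blockPerturbation c u U r
  let z := blockPerturbation c u U s
  have hrs : ∀ k, r k + s k + r k * s k = 0 := fun k => by
    simp only [r, s]
    field_simp
    ring
  have hzy : ∀ m n, inner ℝ (z m) (y n) = if m = n then (1 : ℝ) else 0 := fun m n => by
    have h := hrs (c m)
    rw [inner_blockPerturbation_blockPerturbation hU hnorm,
      show s (c m) + r (c m) + s (c m) * r (c m) = 0 by linarith]
    simp
  have hy : ∀ n, ‖y n‖ ^ 2 = 1 + ((1 + c n : ℝ) ^ 2 - 1) * u n ^ 2 :=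
    norm_sq_blockPerturbation hU hnorm r
  have hypos : ∀ n, 0 < ‖y n‖ := fun n => norm_pos_iff.2 fun h0 => by
    simpa [h0] using hzy n n
  have hyle : ∀ n, ‖y n‖ ≤ 1 + ε n := fun n => by
    have h := (hsmall n).trans (min_le_left _ _)
    exact le_of_sq_le_sq (by nlinarith [hy n, hε n]) (by linarith [hε n])
  have hyle2 : ∀ n, ‖y n‖ ≤ 2 := fun n => by
    have h := (hsmall n).trans (min_le_right _ _)
    exact le_of_sq_le_sq (by nlinarith [hy n]) (by norm_num)
  have hz : ∀ n, ‖z n‖ ≤ 1 := fun n => by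
    have h := norm_sq_blockPerturbation hU hnorm s n
    have hk : (1 + s (c n)) ^ 2 ≤ 1 := by
      simp only [s, add_sub_cancel]
      exact pow_le_one₀ (by positivity) (inv_le_one_of_one_le₀ (by simp))
    exact le_of_sq_le_sq (by nlinarith [h, sq_nonneg (u n)]) zero_le_one
  have hone : ∀ n, ‖‖y n‖⁻¹ • y n‖ = 1 := fun n => by
    rw [norm_smul, norm_inv, norm_norm, inv_mul_cancel₀ (hypos n).ne']
  refine ⟨fun n => ‖y n‖⁻¹ • y n, fun n => ‖y n‖ • innerSL ℝ (z n), fun m n => ?_, ?_,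
    fun v hv => ?_, hone, fun n => ?_, ?_⟩
  · simp only [_root_.smul_apply, innerSL_apply_apply, inner_smul_right, hzy,
      smul_eq_mul]
    split_ifs with h
    · rw [h, mul_one, mul_inv_cancel₀ (hypos n).ne']
    · simp
  · rw [Submodule.topologicalClosure_eq_top_iff, Submodule.eq_bot_iff]
    intro v hv
    refine eq_zero_of_inner_blockPerturbation_eq_zero hU hnorm (r := r)
      (fun k => by positivity) fun j => ?_
    have h := (Submodule.mem_orthogonal _ v).1 hv _ (Submodule.subset_span ⟨j, rfl⟩)
    simpa [inner_smul_left, (hypos j).ne'] using h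
  · refine eq_zero_of_inner_blockPerturbation_eq_zero hU hnorm (r := s)
      (fun k => by simp only [s, add_sub_cancel]; positivity) fun j => ?_
    simpa [(hypos j).ne'] using hv j
  · rw [hone, one_mul, norm_smul, norm_norm, innerSL_apply_norm]
    exact (mul_le_of_le_one_right (norm_nonneg _) (hz n)).trans (hyle n)
  · rintro ⟨T, hT⟩
    obtain ⟨k, hk⟩ := exists_nat_gt (2 * ‖T.adjoint‖)
    have hcoord : ∀ j, (1 + k : ℝ) / 2 * |U k j| ≤ |T.adjoint (U k) j| := fun j => by
      have h : T.adjoint (U k) j = ‖y j‖⁻¹ * inner ℝ (y j) (U k) := by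
        rw [← real_inner_smul_left, ← show T (lp.single 2 j 1) = ‖y j‖⁻¹ • y j from hT j,
          ← ContinuousLinearMap.adjoint_inner_right, lp.inner_single_left]
        simp
      rw [h, inner_blockPerturbation, inner_block_unit_vectors hU hnorm, hU]
      by_cases hc : c j = k
      · simp only [hc, if_true, r, mul_one]
        rw [show u j + k * u j = (1 + k) * u j by ring, abs_mul, abs_mul, abs_inv, abs_norm,
          abs_of_nonneg (by positivity : (0 : ℝ) ≤ 1 + k), div_eq_inv_mul, mul_assoc]
        gcongr
        · exact hypos j
        · exact hyle2 j
      · simp [hc]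
    have h := (lp_two_norm_mul_le (by positivity) hcoord).trans (T.adjoint.le_opNorm (U k))
    rw [hnorm] at h
    linarith

/-- If `(ε n)` is nonnegative with `Σ ε n = ∞` (i.e. not summable), then
there is a `(1+ε n)`-bounded Markushevich basis of the real Hilbert space `ℓ²` that is
not equivalent to an orthonormal basis: no bounded invertible linear operator `T` on `ℓ²`
maps the standard orthonormal basis to it. -/
theorem exists_bounded_Mbasis_not_equiv_ONB
    (ε : ℕ → ℝ) (hε : ∀ n, 0 ≤ ε n) (hdiv : ¬ Summable ε) :
    ∃ (x : ℕ → lp (fun _ : ℕ => ℝ) 2)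
      (xs : ℕ → (lp (fun _ : ℕ => ℝ) 2) →L[ℝ] ℝ),
      (∀ m n, xs m (x n) = if m = n then 1 else 0) ∧
      (Submodule.span ℝ (Set.range x)).topologicalClosure = ⊤ ∧
      (∀ v : lp (fun _ : ℕ => ℝ) 2, (∀ n, xs n v = 0) → v = 0) ∧
      (∀ n, ‖x n‖ * ‖xs n‖ ≤ 1 + ε n) ∧
      ¬ ∃ T : (lp (fun _ : ℕ => ℝ) 2) ≃L[ℝ] (lp (fun _ : ℕ => ℝ) 2),
          ∀ n, T (lp.single 2 n 1) = x n := by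
  obtain ⟨x, xs, hbi, hfund, htotal, -, hbound, hT⟩ :=
    exists_normalized_bounded_Mbasis_not_image_ONB ε hε hdiv
  exact ⟨x, xs, hbi, hfund, htotal, hbound, fun ⟨T, h⟩ => hT ⟨T.toContinuousLinearMap, h⟩⟩
end

section
/- Let (ε_n)_{n=1}^∞ be a sequence of positive real numbers with lim_{n→∞} n·ε_n = ∞. Then there exists a (1+ε_n)-bounded M-basis {x_n, x_n*}_{n∈ℕ} of the real Hilbert space ℓ² such that for every permutation σ of ℕ and every constant C ≥ 1 there exist finite sets E ⊆ F ⊆ ℕ with every element of E smaller than every element of F \ E, and signs δ_ν ∈ {−1, 1} for ν ∈ F, such that ‖Σ_{ν∈E} δ_ν x_{σ(ν)}‖ ≥ C · ‖Σ_{ν∈F} δ_ν x_{σ(ν)}‖. In particular, no permutation of (x_n) satisfies a uniform partial-sum bound, so no permutation of this M-basis is equivalent to a Schauder basis of ℓ². -/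
open scoped BigOperators RealInnerProductSpace

/-- The dyadic block `{n | 2 ^ j ≤ n + 1 < 2 ^ (j + 1)}`. -/
def dyadicBlock (j : ℕ) : Finset ℕ := Finset.Ico (2 ^ j - 1) (2 ^ (j + 1) - 1)

/-- The index of the dyadic block containing `n`. -/
def blockIndex (n : ℕ) : ℕ := Nat.log 2 (n + 1)

lemma mem_dyadicBlock {n j : ℕ} : n ∈ dyadicBlock j ↔ blockIndex n = j := by
  have h : 0 < 2 ^ j := by positivity
  rw [dyadicBlock, blockIndex, Finset.mem_Ico, Nat.log_eq_iff (Or.inr ⟨by norm_num, by omega⟩)]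
  omega

lemma card_dyadicBlock (j : ℕ) : (dyadicBlock j).card = 2 ^ j := by
  have h : 0 < 2 ^ j := by positivity
  rw [dyadicBlock, Nat.card_Ico, pow_succ]
  omega

lemma dyadicBlock_nonempty (j : ℕ) : (dyadicBlock j).Nonempty := by
  rw [← Finset.card_pos, card_dyadicBlock]
  positivity

section BlockPerturbation

variable {H : Type*} [NormedAddCommGroup H] [InnerProductSpace ℝ H]

/-- The perturbation of a sequence `e` obtained by adding to `e n` the multiple `a j` of the sum
of `e` over the dyadic block `j` of `n`. -/
noncomputable def blockPerturb (e : ℕ → H) (a : ℕ → ℝ) (n : ℕ) : H :=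
  e n + a (blockIndex n) • ∑ i ∈ dyadicBlock (blockIndex n), e i

lemma inner_blockSum {e : ℕ → H} (he : Orthonormal ℝ e) (m j : ℕ) :
    ⟪e m, ∑ i ∈ dyadicBlock j, e i⟫ = if blockIndex m = j then 1 else 0 := by
  simp [inner_sum, orthonormal_iff_ite.mp he, mem_dyadicBlock]

lemma inner_blockSum_blockSum {e : ℕ → H} (he : Orthonormal ℝ e) (i j : ℕ) :
    ⟪∑ k ∈ dyadicBlock i, e k, ∑ k ∈ dyadicBlock j, e k⟫ = if i = j then 2 ^ i else 0 := by
  rw [sum_inner, Finset.sum_congr rfl fun k hk => by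
    rw [inner_blockSum he, mem_dyadicBlock.mp hk]]
  simp [card_dyadicBlock]

lemma inner_blockPerturb {e : ℕ → H} (he : Orthonormal ℝ e) (a b : ℕ → ℝ) (m n : ℕ) :
    ⟪blockPerturb e a m, blockPerturb e b n⟫ = (if m = n then 1 else 0) +
      if blockIndex m = blockIndex n then
        a (blockIndex n) + b (blockIndex n) + a (blockIndex n) * b (blockIndex n) * 2 ^ blockIndex n
      else 0 := by
  simp only [blockPerturb, inner_add_left, inner_add_right, real_inner_smul_left,
    real_inner_smul_right, inner_blockSum he, inner_blockSum_blockSum he,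
    orthonormal_iff_ite.mp he, real_inner_comm (e n), eq_comm (a := n) (b := m)]
  by_cases h : blockIndex m = blockIndex n
  · simp only [h, if_true]
    ring
  · simp [h, Ne.symm h]

lemma norm_sq_sum_blockPerturb {e : ℕ → H} (he : Orthonormal ℝ e) (a : ℕ → ℝ) (j : ℕ)
    (s : Finset ℕ) (hs : s ⊆ dyadicBlock j) :
    ‖∑ n ∈ s, blockPerturb e a n‖ ^ 2 = s.card + s.card ^ 2 * (2 * a j + a j ^ 2 * 2 ^ j) := by
  have hj : ∀ n ∈ s, blockIndex n = j := fun n hn => mem_dyadicBlock.mp (hs hn)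
  rw [← real_inner_self_eq_norm_sq, sum_inner]
  have : ∀ m ∈ s, ⟪blockPerturb e a m, ∑ n ∈ s, blockPerturb e a n⟫ =
      1 + s.card * (2 * a j + a j ^ 2 * 2 ^ j) := by
    intro m hm
    rw [inner_sum, Finset.sum_congr rfl fun n hn => by
      rw [inner_blockPerturb he, hj m hm, hj n hn, if_pos rfl]]
    simp [Finset.sum_add_distrib, hm]
    ring
  rw [Finset.sum_congr rfl this]
  simp
  ring

lemma norm_sq_blockPerturb {e : ℕ → H} (he : Orthonormal ℝ e) (a : ℕ → ℝ) (n : ℕ) :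
    ‖blockPerturb e a n‖ ^ 2 =
      1 + (2 * a (blockIndex n) + a (blockIndex n) ^ 2 * 2 ^ blockIndex n) := by
  simpa using norm_sq_sum_blockPerturb he a (blockIndex n) {n} (by simp [mem_dyadicBlock])

/-- A nondegenerate block perturbation of a total sequence is total. -/
lemma eq_zero_of_inner_blockPerturb_eq_zero {e : ℕ → H}
    (htot : ∀ v : H, (∀ n, ⟪e n, v⟫ = 0) → v = 0) {a : ℕ → ℝ} (ha : ∀ j, 1 + a j * 2 ^ j ≠ 0)
    {v : H} (hv : ∀ n, ⟪blockPerturb e a n, v⟫ = 0) : v = 0 := by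
  have hsum : ∀ j, ⟪∑ i ∈ dyadicBlock j, e i, v⟫ = 0 := by
    intro j
    have h : ∑ n ∈ dyadicBlock j, ⟪blockPerturb e a n, v⟫ =
        (1 + a j * 2 ^ j) * ⟪∑ i ∈ dyadicBlock j, e i, v⟫ := by
      rw [Finset.sum_congr rfl fun n hn => by
        rw [blockPerturb, mem_dyadicBlock.mp hn, inner_add_left, real_inner_smul_left]]
      rw [Finset.sum_add_distrib, ← sum_inner, Finset.sum_const, card_dyadicBlock, nsmul_eq_mul]
      push_cast
      ring
    rw [Finset.sum_eq_zero fun n _ => hv n] at h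
    exact (mul_eq_zero.mp h.symm).resolve_left (ha j)
  refine htot v fun n => ?_
  simpa [blockPerturb, inner_add_left, real_inner_smul_left, hsum] using hv n

end BlockPerturbation

/-- A finite set in a linear order has initial segments of every cardinality up to its own. -/
lemma Finset.exists_initial_subset_card_eq {α : Type*} [LinearOrder α] (F : Finset α) {k : ℕ}
    (hk : k ≤ F.card) : ∃ E ⊆ F, E.card = k ∧ ∀ ν ∈ E, ∀ l ∈ F \ E, ν < l := by
  induction F using Finset.induction_on_max with
  | empty => exact ⟨∅, by simp, by simp_all, by simp⟩
  | insert a s ha ih =>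
    have has : a ∉ s := fun h => lt_irrefl _ (ha a h)
    rw [Finset.card_insert_of_notMem has] at hk
    rcases Nat.lt_or_ge s.card k with h | h
    · exact ⟨insert a s, subset_rfl, by rw [Finset.card_insert_of_notMem has]; omega, by simp⟩
    · obtain ⟨E, hE, hcard, hlt⟩ := ih h
      refine ⟨E, hE.trans (Finset.subset_insert a s), hcard, fun ν hν l hl => ?_⟩
      obtain ⟨hl, hlE⟩ := Finset.mem_sdiff.mp hl
      rcases Finset.mem_insert.mp hl with rfl | hl
      · exact ha ν (hE hν)
      · exact hlt ν hν l (Finset.mem_sdiff.mpr ⟨hl, hlE⟩)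

/-- Sums over a finite set and over an initial segment of it are partial sums of one series. -/
lemma Finset.exists_partial_sums_of_initial {H : Type*} [AddCommGroup H] [Module ℝ H]
    (z : ℕ → H) {E F : Finset ℕ} (hEF : E ⊆ F) (hlt : ∀ ν ∈ E, ∀ l ∈ F \ E, ν < l) :
    ∃ m n : ℕ, m ≤ n ∧ ∃ a : ℕ → ℝ,
      ∑ i ∈ range m, a i • z i = ∑ i ∈ E, z i ∧ ∑ i ∈ range n, a i • z i = ∑ i ∈ F, z i := by
  refine ⟨E.sup Nat.succ, F.sup Nat.succ, Finset.sup_mono hEF, fun i => if i ∈ F then 1 else 0,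
    ?_, ?_⟩
  all_goals
    simp only [ite_smul, one_smul, zero_smul, ← Finset.sum_filter]
    congr 1
    ext i
    simp only [mem_filter, mem_range, Finset.lt_sup_iff]
  · constructor
    · rintro ⟨⟨b, hb, hib⟩, hi⟩
      by_contra hiE
      have := hlt b hb i (mem_sdiff.mpr ⟨hi, hiE⟩)
      omega
    · exact fun hi => ⟨⟨i, hi, Nat.lt_succ_self i⟩, hEF hi⟩
  · exact ⟨fun h => h.2, fun hi => ⟨⟨i, hi, Nat.lt_succ_self i⟩, hi⟩⟩

/-- If `n * ε n → ∞`, there are block weights `d j ∈ (0, 1]`, arbitrarily small along blocks, with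
`d j ^ (-2) ≤ 1 + 2 ^ j * ε n` on the dyadic block `j`. -/
lemma exists_block_weights (ε : ℕ → ℝ) (hε : ∀ n, 0 < ε n)
    (hlim : Filter.Tendsto (fun n : ℕ => (n : ℝ) * ε n) Filter.atTop Filter.atTop) :
    ∃ d : ℕ → ℝ, (∀ j, 0 < d j) ∧ (∀ j, d j ≤ 1) ∧
      (∀ n, (d (blockIndex n))⁻¹ ^ 2 ≤ 1 + 2 ^ blockIndex n * ε n) ∧
      ∀ C : ℝ, ∃ j, C ≤ (d (j + 1))⁻¹ := by
  let c : ℕ → ℝ := fun j => 2 ^ j * (dyadicBlock j).inf' (dyadicBlock_nonempty j) ε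
  have hc : ∀ j, 0 < c j := fun j => mul_pos (by positivity)
    ((Finset.lt_inf'_iff _).mpr fun n _ => hε n)
  refine ⟨fun j => (√(1 + c j))⁻¹, fun j => ?_, fun j => ?_, fun n => ?_, fun C => ?_⟩
  · have := hc j
    positivity
  · exact inv_le_one_of_one_le₀ (Real.one_le_sqrt.mpr (by linarith [hc j]))
  · rw [inv_inv, Real.sq_sqrt (by linarith [hc (blockIndex n)])]
    have : (dyadicBlock (blockIndex n)).inf' (dyadicBlock_nonempty _) ε ≤ ε n :=
      Finset.inf'_le _ (mem_dyadicBlock.mpr rfl)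
    simp only [c]
    gcongr
  · obtain ⟨n₀, hn₀⟩ := Filter.eventually_atTop.mp (hlim.eventually_ge_atTop (2 * C ^ 2))
    refine ⟨n₀, ?_⟩
    rw [inv_inv]
    refine Real.le_sqrt_of_sq_le ?_
    obtain ⟨n, hn, hmin⟩ := Finset.exists_mem_eq_inf' (dyadicBlock_nonempty (n₀ + 1)) ε
    simp only [c, hmin]
    rw [dyadicBlock, Finset.mem_Ico] at hn
    have hpow : n₀ + 1 < 2 ^ (n₀ + 1) := Nat.lt_two_pow_self
    have hle : n ≤ 2 * 2 ^ (n₀ + 1) := by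
      have := pow_succ 2 (n₀ + 1)
      omega
    have hle' : (n : ℝ) ≤ 2 * 2 ^ (n₀ + 1) := by exact_mod_cast hle
    nlinarith [hn₀ n (by omega), mul_le_mul_of_nonneg_right hle' (hε n).le]

lemma orthonormal_lp_single : Orthonormal ℝ fun n : ℕ => lp.single (E := fun _ : ℕ => ℝ) 2 n 1 := by
  rw [orthonormal_iff_ite]
  intro i j
  rw [lp.inner_single_left]
  simp [lp.single_apply, Pi.single_apply]

/-- If `ε n > 0` and `n · ε n → ∞`, then there exists a `(1+ε n)`-bounded
Markushevich basis `(xₙ, xₙ*)` of the real Hilbert space `ℓ²` such that for every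
permutation `σ` of `ℕ` and every `C ≥ 1` there are finite sets `E ⊆ F` (every element of
`E` smaller than every element of `F \ E`) and signs `δ ν ∈ {−1,1}` with
`‖Σ_{ν∈E} δ ν • x (σ ν)‖ ≥ C · ‖Σ_{ν∈F} δ ν • x (σ ν)‖`; in particular no permutation of
`(xₙ)` satisfies a uniform partial-sum bound. -/
theorem exists_bounded_Mbasis_no_permutation_Schauder_l2
    (ε : ℕ → ℝ) (hε : ∀ n, 0 < ε n)
    (hlim : Filter.Tendsto (fun n : ℕ => (n : ℝ) * ε n) Filter.atTop Filter.atTop) :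
    ∃ (x : ℕ → lp (fun _ : ℕ => ℝ) 2)
      (xs : ℕ → (lp (fun _ : ℕ => ℝ) 2) →L[ℝ] ℝ),
      (∀ m n, xs m (x n) = if m = n then 1 else 0) ∧
      (Submodule.span ℝ (Set.range x)).topologicalClosure = ⊤ ∧
      (∀ v : lp (fun _ : ℕ => ℝ) 2, (∀ n, xs n v = 0) → v = 0) ∧
      (∀ n, ‖x n‖ * ‖xs n‖ ≤ 1 + ε n) ∧
      (∀ σ : Equiv.Perm ℕ, ∀ C : ℝ, 1 ≤ C →
        ∃ (E F : Finset ℕ) (δ : ℕ → ℝ),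
          E ⊆ F ∧
          (∀ ν ∈ E, ∀ l ∈ F \ E, ν < l) ∧
          (∀ ν ∈ F, δ ν = 1 ∨ δ ν = -1) ∧
          C * ‖∑ ν ∈ F, δ ν • x (σ ν)‖ ≤ ‖∑ ν ∈ E, δ ν • x (σ ν)‖) ∧
      (∀ σ : Equiv.Perm ℕ, ¬ ∃ C : ℝ,
        ∀ m n : ℕ, m ≤ n → ∀ a : ℕ → ℝ,
          ‖∑ i ∈ Finset.range m, a i • x (σ i)‖ ≤
            C * ‖∑ i ∈ Finset.range n, a i • x (σ i)‖) := by
  obtain ⟨d, hd0, hd1, hdε, hdC⟩ := exists_block_weights ε hε hlim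
  let e : ℕ → lp (fun _ : ℕ => ℝ) 2 := fun n => lp.single 2 n 1
  have he : Orthonormal ℝ e := orthonormal_lp_single
  have htot : ∀ v, (∀ n, ⟪e n, v⟫ = 0) → v = 0 := by
    intro v hv
    ext n
    have := hv n
    rw [lp.inner_single_left] at this
    simpa using this
  let a : ℕ → ℝ := fun j => (d j - 1) / 2 ^ j
  let b : ℕ → ℝ := fun j => ((d j)⁻¹ - 1) / 2 ^ j
  have ha : ∀ j, 1 + a j * 2 ^ j ≠ 0 := by
    intro j
    simp only [a]
    rw [div_mul_cancel₀ _ (by positivity)]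
    linarith [hd0 j]
  have hb : ∀ j, 1 + b j * 2 ^ j ≠ 0 := by
    intro j
    simp only [b]
    rw [div_mul_cancel₀ _ (by positivity)]
    linarith [inv_pos.mpr (hd0 j)]
  have haa : ∀ j, 2 * a j + a j ^ 2 * 2 ^ j = (d j ^ 2 - 1) / 2 ^ j := by
    intro j
    simp only [a]
    field_simp
    ring
  have hbb : ∀ j, 2 * b j + b j ^ 2 * 2 ^ j = ((d j)⁻¹ ^ 2 - 1) / 2 ^ j := by
    intro j
    simp only [b]
    field_simp
    ring
  have hba : ∀ j, b j + a j + b j * a j * 2 ^ j = 0 := by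
    intro j
    have := (hd0 j).ne'
    simp only [a, b]
    field_simp
    ring
  have hunbounded : ∀ σ : Equiv.Perm ℕ, ∀ C : ℝ, 1 ≤ C → ∃ E F : Finset ℕ, E ⊆ F ∧
      (∀ ν ∈ E, ∀ l ∈ F \ E, ν < l) ∧ 0 < ‖∑ ν ∈ F, blockPerturb e a (σ ν)‖ ∧
      C * ‖∑ ν ∈ F, blockPerturb e a (σ ν)‖ ≤ ‖∑ ν ∈ E, blockPerturb e a (σ ν)‖ := by
    intro σ C hC
    obtain ⟨j, hj⟩ := hdC (2 * C)
    have hF : (((dyadicBlock (j + 1)).map σ.symm.toEmbedding).map σ.toEmbedding) =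
        dyadicBlock (j + 1) := by
      ext i
      simp
    set F := (dyadicBlock (j + 1)).map σ.symm.toEmbedding with hFdef
    have hFcard : F.card = 2 ^ (j + 1) := by rw [hFdef, Finset.card_map, card_dyadicBlock]
    obtain ⟨E, hEF, hE, hlt⟩ := F.exists_initial_subset_card_eq (k := 2 ^ j)
      (by rw [hFcard, pow_succ]; omega)
    have hsq : ∀ S ⊆ F, ‖∑ ν ∈ S, blockPerturb e a (σ ν)‖ ^ 2 =
        S.card + S.card ^ 2 * ((d (j + 1) ^ 2 - 1) / 2 ^ (j + 1)) := by
      intro S hS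
      have h := norm_sq_sum_blockPerturb he a (j + 1) (S.map σ.toEmbedding)
        (by rw [← hF]; exact Finset.map_subset_map.mpr hS)
      simpa only [Finset.sum_map, Finset.card_map, haa, Equiv.coe_toEmbedding] using h
    have hd := hd0 (j + 1)
    have hsqF : ‖∑ ν ∈ F, blockPerturb e a (σ ν)‖ ^ 2 = d (j + 1) ^ 2 * 2 ^ (j + 1) := by
      rw [hsq F subset_rfl, hFcard]
      push_cast
      field_simp
      ring
    have hsqE : ‖∑ ν ∈ E, blockPerturb e a (σ ν)‖ ^ 2 = 2 ^ j * (1 + d (j + 1) ^ 2) / 2 := by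
      rw [hsq E hEF, hE]
      push_cast
      rw [pow_succ (2 : ℝ) j]
      field_simp
      ring
    have hCd : 2 * C * d (j + 1) ≤ 1 := by
      rwa [← le_div_iff₀ hd, one_div]
    refine ⟨E, F, hEF, hlt, ?_, ?_⟩
    · have : 0 < ‖∑ ν ∈ F, blockPerturb e a (σ ν)‖ ^ 2 := by rw [hsqF]; positivity
      exact (norm_nonneg _).lt_of_ne' fun h => by simp [h] at this
    · refine le_of_abs_le (abs_le_of_sq_le_sq ?_ (norm_nonneg _))
      rw [mul_pow, hsqF, hsqE, pow_succ (2 : ℝ) j]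
      have h1 : (2 * C * d (j + 1)) ^ 2 ≤ 1 := pow_le_one₀ (by positivity) hCd
      have h2 : (0 : ℝ) < 2 ^ j := by positivity
      nlinarith [mul_le_mul_of_nonneg_left h1 h2.le, mul_pos h2 (pow_pos hd 2)]
  refine ⟨blockPerturb e a, fun n => innerSL ℝ (blockPerturb e b n), ?_, ?_, ?_, ?_, ?_, ?_⟩
  · intro m n
    rw [innerSL_apply_apply, inner_blockPerturb he, hba]
    simp
  · rw [Submodule.topologicalClosure_eq_top_iff, Submodule.eq_bot_iff]
    intro v hv
    refine eq_zero_of_inner_blockPerturb_eq_zero htot ha fun n => ?_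
    exact (Submodule.mem_orthogonal _ v).mp hv _ (Submodule.subset_span ⟨n, rfl⟩)
  · intro v hv
    exact eq_zero_of_inner_blockPerturb_eq_zero htot hb fun n => by simpa using hv n
  · intro n
    have hεn := hε n
    rw [innerSL_apply_norm]
    have hx : ‖blockPerturb e a n‖ ≤ 1 := by
      refine (sq_le_one_iff₀ (norm_nonneg _)).mp ?_
      rw [norm_sq_blockPerturb he, haa, add_le_iff_nonpos_right]
      refine div_nonpos_of_nonpos_of_nonneg ?_ (by positivity)
      linarith [pow_le_one₀ (hd0 (blockIndex n)).le (hd1 (blockIndex n)) (n := 2)]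
    have hy : ‖blockPerturb e b n‖ ≤ 1 + ε n := by
      refine le_of_abs_le (abs_le_of_sq_le_sq ?_ (by positivity))
      rw [norm_sq_blockPerturb he, hbb]
      have : ((d (blockIndex n))⁻¹ ^ 2 - 1) / 2 ^ blockIndex n ≤ ε n := by
        rw [div_le_iff₀ (by positivity)]
        linarith [hdε n]
      nlinarith
    calc ‖blockPerturb e a n‖ * ‖blockPerturb e b n‖ ≤ 1 * (1 + ε n) := by gcongr
      _ = 1 + ε n := one_mul _
  · intro σ C hC
    obtain ⟨E, F, hEF, hlt, -, hle⟩ := hunbounded σ C hC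
    exact ⟨E, F, fun _ => 1, hEF, hlt, fun _ _ => Or.inl rfl, by simpa using hle⟩
  · rintro σ ⟨C, hC⟩
    obtain ⟨E, F, hEF, hlt, hpos, hle⟩ := hunbounded σ (max C 0 + 1)
      (by linarith [le_max_right C 0])
    obtain ⟨m, n, hmn, c, hm, hn⟩ :=
      Finset.exists_partial_sums_of_initial (fun ν => blockPerturb e a (σ ν)) hEF hlt
    have h := hC m n hmn c
    rw [hm, hn] at h
    nlinarith [le_max_left C 0]
end

section
/- Let X be an infinite-dimensional separable real Banach space and let (ε_n)_{n=1}^∞ be a sequence of positive real numbers such that lim_{n→∞} n·ε_n = ∞ and Σ_{n=1}^∞ ε_n² = ∞. Then there exists a (1+ε_n)-bounded M-basis {x_n, x_n*}_{n∈ℕ} of X such that for every permutation σ of ℕ there is no constant C < ∞ with ‖Σ_{i≤m} a_i x_{σ(i)}‖ ≤ C‖Σ_{i≤n} a_i x_{σ(i)}‖ for all m ≤ n and all scalars a_1,…,a_n; in particular no permutation of this M-basis is equivalent to a Schauder basis of X. -/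
open scoped BigOperators

section Variance
open MeasureTheory

variable {α β : Type*} [MeasurableSpace α] [MeasurableSpace β]

theorem integrable_of_measurable_of_abs_le {μ : Measure α} [IsFiniteMeasure μ] {f : α → ℝ}
    (hf : Measurable f) {C : ℝ} (hC : ∀ x, |f x| ≤ C) : Integrable f μ :=
  Integrable.of_bound hf.aestronglyMeasurable C (Filter.Eventually.of_forall hC)

theorem abs_integral_le_of_abs_le {μ : Measure α} [IsProbabilityMeasure μ] {f : α → ℝ}
    {C : ℝ} (hC : ∀ x, |f x| ≤ C) : |∫ x, f x ∂μ| ≤ C := by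
  simpa using norm_integral_le_of_norm_le_const (μ := μ) (f := f) (C := C)
    (Filter.Eventually.of_forall hC)

theorem abs_sq_le_sq_of_abs_le {a C : ℝ} (h : |a| ≤ C) : |a ^ 2| ≤ C ^ 2 := by
  rw [abs_pow]; gcongr

/-- The variance of a bounded function in terms of the positive parts of its differences. -/
theorem integral_sq_sub_sq_integral_eq {μ : Measure α} [IsProbabilityMeasure μ] {g : α → ℝ}
    (hg : Measurable g) {C : ℝ} (hC : ∀ x, |g x| ≤ C) :
    ∫ x, g x ^ 2 ∂μ - (∫ x, g x ∂μ) ^ 2 = ∫ x, ∫ s, (max (g x - g s) 0) ^ 2 ∂μ ∂μ := by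
  have ig : Integrable g μ := integrable_of_measurable_of_abs_le hg hC
  have ig2 : Integrable (fun x => g x ^ 2) μ :=
    integrable_of_measurable_of_abs_le (hg.pow_const 2) fun x => abs_sq_le_sq_of_abs_le (hC x)
  have hmp : Measurable fun p : α × α => (max (g p.1 - g p.2) 0) ^ 2 := by fun_prop
  have hmpos : ∀ p : α × α, |(max (g p.1 - g p.2) 0) ^ 2| ≤ (2 * C) ^ 2 := by
    intro p
    apply abs_sq_le_sq_of_abs_le
    have h1 := abs_le.1 (hC p.1)
    have h2 := abs_le.1 (hC p.2)
    rw [abs_of_nonneg (le_max_right _ _)]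
    exact max_le (by linarith) (by linarith)
  have ip : Integrable (fun p : α × α => (max (g p.1 - g p.2) 0) ^ 2) (μ.prod μ) :=
    integrable_of_measurable_of_abs_le hmp hmpos
  have ip' : Integrable (fun p : α × α => (max (g p.2 - g p.1) 0) ^ 2) (μ.prod μ) := ip.swap
  have e1 : ∫ x, ∫ s, (max (g x - g s) 0) ^ 2 ∂μ ∂μ
      = ∫ x, ∫ s, (max (g s - g x) 0) ^ 2 ∂μ ∂μ := by
    rw [integral_integral_swap ip]
  have e2 : ∫ x, ∫ s, (max (g x - g s) 0) ^ 2 ∂μ ∂μ + ∫ x, ∫ s, (max (g s - g x) 0) ^ 2 ∂μ ∂μ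
      = ∫ x, ∫ s, (g x - g s) ^ 2 ∂μ ∂μ := by
    rw [← integral_add ip.integral_prod_left ip'.integral_prod_left]
    refine integral_congr_ae (Filter.Eventually.of_forall fun x => ?_)
    have i1 : Integrable (fun s => (max (g x - g s) 0) ^ 2) μ :=
      integrable_of_measurable_of_abs_le (by fun_prop) fun s => hmpos (x, s)
    have i2 : Integrable (fun s => (max (g s - g x) 0) ^ 2) μ :=
      integrable_of_measurable_of_abs_le (by fun_prop) fun s => hmpos (s, x)
    simp only
    rw [← integral_add i1 i2]
    refine integral_congr_ae (Filter.Eventually.of_forall fun s => ?_)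
    simp only
    rcases le_total (g x) (g s) with h | h
    · rw [max_eq_right (by linarith), max_eq_left (by linarith)]; ring
    · rw [max_eq_left (by linarith), max_eq_right (by linarith)]; ring
  have e3 : ∫ x, ∫ s, (g x - g s) ^ 2 ∂μ ∂μ
      = 2 * (∫ x, g x ^ 2 ∂μ - (∫ x, g x ∂μ) ^ 2) := by
    have : ∀ x, ∫ s, (g x - g s) ^ 2 ∂μ
        = g x ^ 2 + (-2 * (∫ s, g s ∂μ)) * g x + ∫ s, g s ^ 2 ∂μ := by
      intro x
      have : ∀ s, (g x - g s) ^ 2 = (g x ^ 2 + (-2 * g x) * g s) + g s ^ 2 := fun s => by ring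
      simp_rw [this]
      rw [integral_add ((integrable_const _).fun_add (ig.const_mul _)) ig2,
        integral_add (integrable_const _) (ig.const_mul _), integral_const_mul]
      simp; ring
    simp_rw [this]
    rw [integral_add (ig2.fun_add (ig.const_mul _)) (integrable_const _),
      integral_add ig2 (ig.const_mul _), integral_const_mul]
    simp; ring
  linarith

/-- Tensorization of the variance over a product of two probability spaces. -/
theorem integral_prod_sq_sub_sq_le {μ : Measure α} {ν : Measure β} [IsProbabilityMeasure μ]
    [IsProbabilityMeasure ν] {F : α × β → ℝ} (hF : Measurable F) {C : ℝ} (hC : ∀ p, |F p| ≤ C) :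
    ∫ p, F p ^ 2 ∂(μ.prod ν) - (∫ p, F p ∂(μ.prod ν)) ^ 2 ≤
      ∫ x, (∫ y, F (x, y) ^ 2 ∂ν - (∫ y, F (x, y) ∂ν) ^ 2) ∂μ +
      ∫ y, (∫ x, F (x, y) ^ 2 ∂μ - (∫ x, F (x, y) ∂μ) ^ 2) ∂ν := by
  set g : α → ℝ := fun x => ∫ y, F (x, y) ∂ν with hg
  set k : β → ℝ := fun y => ∫ x, F (x, y) ∂μ with hk
  set m : ℝ := ∫ p, F p ∂(μ.prod ν) with hm
  have mF2 : Measurable fun p => F p ^ 2 := hF.pow_const 2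
  have bF2 : ∀ p, |F p ^ 2| ≤ C ^ 2 := fun p => abs_sq_le_sq_of_abs_le (hC p)
  have iF : Integrable F (μ.prod ν) := integrable_of_measurable_of_abs_le hF hC
  have iF2 : Integrable (fun p => F p ^ 2) (μ.prod ν) :=
    integrable_of_measurable_of_abs_le mF2 bF2
  have mg : Measurable g := (hF.stronglyMeasurable.integral_prod_right' (ν := ν)).measurable
  have mk : Measurable k := (hF.stronglyMeasurable.integral_prod_left' (μ := μ)).measurable
  have bg : ∀ x, |g x| ≤ C := fun x => abs_integral_le_of_abs_le fun y => hC (x, y)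
  have bk : ∀ y, |k y| ≤ C := fun y => abs_integral_le_of_abs_le fun x => hC (x, y)
  have ig : Integrable g μ := integrable_of_measurable_of_abs_le mg bg
  have ik : Integrable k ν := integrable_of_measurable_of_abs_le mk bk
  have ig2 : Integrable (fun x => g x ^ 2) μ :=
    integrable_of_measurable_of_abs_le (mg.pow_const 2) fun x => abs_sq_le_sq_of_abs_le (bg x)
  have ik2 : Integrable (fun x => k x ^ 2) ν :=
    integrable_of_measurable_of_abs_le (mk.pow_const 2) fun x => abs_sq_le_sq_of_abs_le (bk x)
  have egm : ∫ x, g x ∂μ = m := (integral_prod _ iF).symm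
  have ekm : ∫ y, k y ∂ν = m := (integral_prod_symm _ iF).symm
  have e1 : ∫ x, (∫ y, F (x, y) ^ 2 ∂ν - g x ^ 2) ∂μ
      = ∫ p, F p ^ 2 ∂(μ.prod ν) - ∫ x, g x ^ 2 ∂μ := by
    rw [integral_sub iF2.integral_prod_left ig2, integral_prod _ iF2]
  have e2 : ∫ y, (∫ x, F (x, y) ^ 2 ∂μ - k y ^ 2) ∂ν
      = ∫ p, F p ^ 2 ∂(μ.prod ν) - ∫ y, k y ^ 2 ∂ν := by
    rw [integral_sub iF2.integral_prod_right ik2, integral_prod_symm _ iF2]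
  have key : 0 ≤ ∫ x, ∫ y, (F (x, y) - g x - k y + m) ^ 2 ∂ν ∂μ :=
    integral_nonneg fun x => integral_nonneg fun y => sq_nonneg _
  have iFx : ∀ x, Integrable (fun y => F (x, y)) ν := fun x =>
    integrable_of_measurable_of_abs_le (by fun_prop) fun y => hC (x, y)
  have iFx2 : ∀ x, Integrable (fun y => F (x, y) ^ 2) ν := fun x =>
    integrable_of_measurable_of_abs_le (by fun_prop) fun y => bF2 (x, y)
  have iFk : Integrable (fun p : α × β => F p * k p.2) (μ.prod ν) := by
    refine integrable_of_measurable_of_abs_le (C := C * C) (by fun_prop) fun p => ?_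
    rw [abs_mul]
    exact mul_le_mul (hC p) (bk _) (abs_nonneg _) ((abs_nonneg _).trans (hC p))
  have iFxk : ∀ x, Integrable (fun y => F (x, y) * k y) ν := by
    intro x
    refine integrable_of_measurable_of_abs_le (C := C * C) (by fun_prop) fun p => ?_
    rw [abs_mul]
    exact mul_le_mul (hC _) (bk _) (abs_nonneg _) ((abs_nonneg _).trans (hC (x, p)))
  have eFk : ∫ x, ∫ y, F (x, y) * k y ∂ν ∂μ = ∫ y, k y ^ 2 ∂ν := by
    rw [integral_integral_swap iFk]
    refine integral_congr_ae (Filter.Eventually.of_forall fun y => ?_)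
    simp only
    rw [integral_mul_const, sq]
  have inner : ∀ x, ∫ y, (F (x, y) - g x - k y + m) ^ 2 ∂ν
      = ((∫ y, F (x, y) ^ 2 ∂ν + (-2) * ∫ y, F (x, y) * k y ∂ν) + (-1) * g x ^ 2)
        + 2 * m * g x + (∫ y, k y ^ 2 ∂ν - m ^ 2) := by
    intro x
    have : ∀ y, (F (x, y) - g x - k y + m) ^ 2 = (((F (x, y) ^ 2 + (-2) * (F (x, y) * k y))
        + (2 * m - 2 * g x) * F (x, y)) + (2 * g x - 2 * m) * k y) + k y ^ 2 + (g x - m) ^ 2 :=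
      fun y => by ring
    simp_rw [this]
    have j1 := (iFx2 x).fun_add ((iFxk x).const_mul (-2))
    have j2 := j1.fun_add ((iFx x).const_mul (2 * m - 2 * g x))
    have j3 := j2.fun_add (ik.const_mul (2 * g x - 2 * m))
    rw [integral_add (j3.fun_add ik2) (integrable_const _), integral_add j3 ik2,
      integral_add j2 (ik.const_mul _), integral_add j1 ((iFx x).const_mul _),
      integral_add (iFx2 x) ((iFxk x).const_mul _), integral_const_mul, integral_const_mul,
      integral_const_mul, ekm]
    change _ + (2 * m - 2 * g x) * g x + _ + _ + _ = _
    simp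
    ring
  simp_rw [inner] at key
  have j1 := iF2.integral_prod_left.fun_add (iFk.integral_prod_left.const_mul (-2))
  have j2 := j1.fun_add (ig2.const_mul (-1))
  have j3 := j2.fun_add (ig.const_mul (2 * m))
  rw [integral_add j3 (integrable_const _), integral_add j2 (ig.const_mul _),
    integral_add j1 (ig2.const_mul _),
    integral_add iF2.integral_prod_left (iFk.integral_prod_left.const_mul _),
    integral_const_mul, integral_const_mul, integral_const_mul, eFk, ← integral_prod _ iF2,
    egm] at key
  simp at key
  rw [e1, e2]
  nlinarith

end Variance

section EfronStein
open MeasureTheory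

variable {Ω : Type*} [MeasurableSpace Ω]

theorem measurable_integral_sq_max_sub_update {L : ℕ} {μ : Measure Ω} [IsProbabilityMeasure μ]
    {F : (Fin L → Ω) → ℝ} (hF : Measurable F) (i : Fin L) :
    Measurable fun ξ => ∫ s, (max (F ξ - F (Function.update ξ i s)) 0) ^ 2 ∂μ := by
  have h1 : Measurable fun p : (Fin L → Ω) × Ω => F (Function.update p.1 i p.2) :=
    hF.comp measurable_update'
  have h2 : Measurable fun p : (Fin L → Ω) × Ω =>
      (max (F p.1 - F (Function.update p.1 i p.2)) 0) ^ 2 := by fun_prop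
  exact (h2.stronglyMeasurable.integral_prod_right' (ν := μ)).measurable

theorem abs_sq_max_sub_le {a b C : ℝ} (ha : |a| ≤ C) (hb : |b| ≤ C) :
    |(max (a - b) 0) ^ 2| ≤ (2 * C) ^ 2 := by
  apply abs_sq_le_sq_of_abs_le
  have h1 := abs_le.1 ha
  have h2 := abs_le.1 hb
  rw [abs_of_nonneg (le_max_right _ _)]
  exact max_le (by linarith) (by linarith)

/-- The Efron–Stein inequality for bounded functions of i.i.d. variables. -/
theorem efron_stein (μ : Measure Ω) [IsProbabilityMeasure μ] {C : ℝ} (L : ℕ)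
    (F : (Fin L → Ω) → ℝ) (hF : Measurable F) (hC : ∀ ξ, |F ξ| ≤ C) :
    ∫ ξ, F ξ ^ 2 ∂(Measure.pi fun _ => μ) - (∫ ξ, F ξ ∂(Measure.pi fun _ => μ)) ^ 2 ≤
      ∑ i, ∫ ξ, ∫ s, (max (F ξ - F (Function.update ξ i s)) 0) ^ 2 ∂μ
        ∂(Measure.pi fun _ => μ) := by
  induction L with
  | zero =>
    have : ∀ ξ, F ξ = F default := fun ξ => congrArg F (Subsingleton.elim _ _)
    simp_rw [this]
    simp
  | succ L ih =>
    have hmp := (measurePreserving_piFinSuccAbove (fun _ : Fin (L + 1) => μ) 0).symm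
    set e := (MeasurableEquiv.piFinSuccAbove (fun _ : Fin (L + 1) => Ω) 0).symm with he
    have hcons : ∀ p, e p = Fin.cons p.1 p.2 := by
      intro p
      simp only [he, MeasurableEquiv.piFinSuccAbove, Fin.insertNthEquiv_zero]
      rfl
    have hint : ∀ G : (Fin (L + 1) → Ω) → ℝ, ∫ ξ, G ξ ∂(Measure.pi fun _ => μ)
        = ∫ p : Ω × (Fin L → Ω), G (Fin.cons p.1 p.2) ∂(μ.prod (Measure.pi fun _ => μ)) := by
      intro G
      rw [← hmp.integral_comp']
      simp_rw [hcons]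
    set F' : Ω × (Fin L → Ω) → ℝ := fun p => F (Fin.cons p.1 p.2) with hF'
    have mF' : Measurable F' := by
      have : F' = fun p => F (e p) := by funext p; rw [hcons]
      rw [this]
      exact hF.comp e.measurable
    have bF' : ∀ p, |F' p| ≤ C := fun p => hC _
    have hvar := integral_prod_sq_sub_sq_le (μ := μ) (ν := Measure.pi fun _ : Fin L => μ) mF' bF'
    have iD : ∀ i : Fin (L + 1), Integrable (fun p : Ω × (Fin L → Ω) =>
        ∫ s, (max (F (Fin.cons p.1 p.2) - F (Function.update (Fin.cons p.1 p.2) i s)) 0) ^ 2 ∂μ)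
        (μ.prod (Measure.pi fun _ => μ)) := by
      intro i
      refine integrable_of_measurable_of_abs_le (C := (2 * C) ^ 2) ?_ fun p =>
        abs_integral_le_of_abs_le fun s => abs_sq_max_sub_le (hC _) (hC _)
      have := (measurable_integral_sq_max_sub_update (μ := μ) hF i).comp e.measurable
      convert this using 2 with p
      simp only [Function.comp, hcons]
    rw [hint, hint, Fin.sum_univ_succ, hint]
    simp_rw [hint]
    refine hvar.trans ?_
    rw [add_comm]
    refine add_le_add (le_of_eq ?_) ?_
    · rw [integral_prod_symm _ (iD 0)]
      refine integral_congr_ae (Filter.Eventually.of_forall fun y => ?_)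
      simp only [Fin.update_cons_zero]
      exact integral_sq_sub_sq_integral_eq (g := fun x => F' (x, y)) (by fun_prop)
        fun x => bF' (x, y)
    · have : ∀ i : Fin L, ∫ p : Ω × (Fin L → Ω), ∫ s, (max (F (Fin.cons p.1 p.2)
          - F (Function.update (Fin.cons p.1 p.2) i.succ s)) 0) ^ 2 ∂μ
            ∂(μ.prod (Measure.pi fun _ => μ)) = ∫ x, ∫ y, ∫ s, (max (F' (x, y)
          - F' (x, Function.update y i s)) 0) ^ 2 ∂μ ∂(Measure.pi fun _ => μ) ∂μ := by
        intro i
        rw [integral_prod _ (iD i.succ)]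
        simp only [hF', Fin.cons_update]
      simp_rw [this]
      have iI : ∀ i : Fin L, Integrable (fun x => ∫ y, ∫ s, (max (F' (x, y)
          - F' (x, Function.update y i s)) 0) ^ 2 ∂μ ∂(Measure.pi fun _ => μ)) μ := by
        intro i
        have := (iD i.succ).integral_prod_left
        simpa only [hF', Fin.cons_update] using this
      rw [← integral_finsetSum _ fun i _ => iI i]
      refine integral_mono_ae ?_ (integrable_finsetSum _ fun i _ => iI i)
        (Filter.Eventually.of_forall fun x => ih (fun y => F' (x, y)) (by fun_prop)
          fun y => bF' (x, y))
      have m1 : Measurable fun x => ∫ y, F' (x, y) ^ 2 ∂(Measure.pi fun _ : Fin L => μ) :=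
        ((mF'.pow_const 2).stronglyMeasurable.integral_prod_right'
          (ν := Measure.pi fun _ : Fin L => μ)).measurable
      have m2 : Measurable fun x => ∫ y, F' (x, y) ∂(Measure.pi fun _ : Fin L => μ) :=
        (mF'.stronglyMeasurable.integral_prod_right'
          (ν := Measure.pi fun _ : Fin L => μ)).measurable
      refine Integrable.sub (integrable_of_measurable_of_abs_le m1 fun x =>
        abs_integral_le_of_abs_le fun y => abs_sq_le_sq_of_abs_le (bF' (x, y)))
        (integrable_of_measurable_of_abs_le (m2.pow_const 2) fun x =>
        abs_sq_le_sq_of_abs_le (abs_integral_le_of_abs_le fun y => bF' (x, y)))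

/-- Chebyshev's inequality for a function whose one-sided discrete gradient is bounded. -/
theorem measureReal_abs_sub_integral_ge_le (μ : Measure Ω) [IsProbabilityMeasure μ] {C B : ℝ}
    {L : ℕ} {F : (Fin L → Ω) → ℝ} (hF : Measurable F) (hC : ∀ ξ, |F ξ| ≤ C)
    (hB : ∀ ξ s, ∑ i, (max (F ξ - F (Function.update ξ i s)) 0) ^ 2 ≤ B) {c : ℝ} (hc : 0 < c) :
    (Measure.pi fun _ : Fin L => μ).real
      {ξ | c ≤ |F ξ - ∫ ξ, F ξ ∂(Measure.pi fun _ => μ)|} ≤ B / c ^ 2 := by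
  set P := Measure.pi fun _ : Fin L => μ with hP
  set m := ∫ ξ, F ξ ∂P with hm
  have iF : Integrable F P := integrable_of_measurable_of_abs_le hF hC
  have iF2 : Integrable (fun ξ => F ξ ^ 2) P :=
    integrable_of_measurable_of_abs_le (hF.pow_const 2) fun x => abs_sq_le_sq_of_abs_le (hC x)
  have iD : ∀ i, Integrable (fun ξ => ∫ s, (max (F ξ - F (Function.update ξ i s)) 0) ^ 2 ∂μ) P :=
    fun i => integrable_of_measurable_of_abs_le (measurable_integral_sq_max_sub_update hF i)
      fun ξ => abs_integral_le_of_abs_le fun s => abs_sq_max_sub_le (hC _) (hC _)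
  have hvar : ∫ ξ, F ξ ^ 2 ∂P - m ^ 2 ≤ B := by
    refine (efron_stein μ L F hF hC).trans ?_
    rw [← integral_finsetSum _ fun i _ => iD i]
    have iDs : ∀ ξ i, Integrable (fun s => (max (F ξ - F (Function.update ξ i s)) 0) ^ 2) μ := by
      intro ξ i
      refine integrable_of_measurable_of_abs_le ?_ fun s => abs_sq_max_sub_le (hC _) (hC _)
      have : Measurable fun s => F (Function.update ξ i s) := hF.comp (measurable_update ξ)
      fun_prop
    calc _ ≤ ∫ _, B ∂P := by
          refine integral_mono_ae (integrable_finsetSum _ fun i _ => iD i) (integrable_const _)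
            (Filter.Eventually.of_forall fun ξ => ?_)
          simp only
          rw [← integral_finsetSum _ fun i _ => iDs ξ i]
          calc _ ≤ ∫ _, B ∂μ := integral_mono_ae (integrable_finsetSum _ fun i _ => iDs ξ i)
                (integrable_const _) (Filter.Eventually.of_forall fun s => hB ξ s)
            _ = B := by simp
      _ = B := by simp
  have e : ∫ ξ, (F ξ - m) ^ 2 ∂P = ∫ ξ, F ξ ^ 2 ∂P - m ^ 2 := by
    have : ∀ ξ, (F ξ - m) ^ 2 = F ξ ^ 2 + (-2 * m) * F ξ + m ^ 2 := fun ξ => by ring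
    simp_rw [this]
    rw [integral_add (iF2.fun_add (iF.const_mul _)) (integrable_const _),
      integral_add iF2 (iF.const_mul _), integral_const_mul]
    simp; ring
  have hsq : Integrable (fun ξ => (F ξ - m) ^ 2) P := by
    refine integrable_of_measurable_of_abs_le (C := (C + |m|) ^ 2) (by fun_prop) fun ξ => ?_
    exact abs_sq_le_sq_of_abs_le ((abs_sub _ _).trans (by linarith [hC ξ]))
  have hmarkov := mul_meas_ge_le_integral_of_nonneg
    (Filter.Eventually.of_forall fun ξ => sq_nonneg (F ξ - m)) hsq (c ^ 2)
  have hset : {ξ | c ^ 2 ≤ (F ξ - m) ^ 2} = {ξ | c ≤ |F ξ - m|} := by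
    ext ξ
    change c ^ 2 ≤ (F ξ - m) ^ 2 ↔ c ≤ |F ξ - m|
    rw [← sq_abs (F ξ - m)]
    exact pow_le_pow_iff_left₀ hc.le (abs_nonneg _) two_ne_zero
  rw [hset] at hmarkov
  rw [le_div_iff₀ (by positivity)]
  linarith

end EfronStein

section DvoretzkyRogers

open Module

variable {Y : Type*} [NormedAddCommGroup Y] [NormedSpace ℝ Y]

/-- A contraction of Euclidean space of maximal volume: the linear map defining the John ellipsoid
of an `n`-dimensional subspace. -/
theorem exists_contraction_abs_det_le (hY : ¬ FiniteDimensional ℝ Y) (n : ℕ) :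
    ∃ u : EuclideanSpace ℝ (Fin n) →ₗ[ℝ] Y, (∀ t, ‖u t‖ ≤ ‖t‖) ∧
      ∀ (D : EuclideanSpace ℝ (Fin n) →ₗ[ℝ] EuclideanSpace ℝ (Fin n)) (r : ℝ), 0 < r →
        (∀ t, ‖u (D t)‖ ≤ r * ‖t‖) → |LinearMap.det D| ≤ r ^ n := by
  obtain ⟨w, hw⟩ : ∃ f : Fin n → Y, LinearIndependent ℝ f := by
    apply exists_linearIndependent_of_le_rank
    rw [FiniteDimensional, ← rank_lt_aleph0_iff, not_lt] at hY
    exact (Cardinal.natCast_le_aleph0).trans hY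
  let V := EuclideanSpace ℝ (Fin n)
  let b : Basis (Fin n) ℝ V := (EuclideanSpace.basisFun (Fin n) ℝ).toBasis
  let φ : V →ₗ[ℝ] Y := b.constr ℝ w
  have hφ : LinearMap.ker φ = ⊥ := LinearMap.ker_eq_bot.2
    (Basis.injective_constr_of_linearIndependent b hw)
  obtain ⟨k, hk, hφk⟩ := φ.exists_antilipschitzWith hφ
  have hlow : ∀ t, ‖t‖ ≤ k * ‖φ t‖ := fun t => ZeroHomClass.bound_of_antilipschitz φ hφk t
  have hφc : Continuous φ := φ.continuous_of_finiteDimensional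
  let K : Set (V →L[ℝ] V) := {M | ∀ t, ‖φ (M t)‖ ≤ ‖t‖}
  have hKclosed : IsClosed K := by
    have : K = ⋂ t, {M : V →L[ℝ] V | ‖φ (M t)‖ ≤ ‖t‖} := by ext; simp [K]
    rw [this]
    refine isClosed_iInter fun t => isClosed_le ?_ continuous_const
    exact (hφc.comp (ContinuousLinearMap.apply ℝ V t).continuous).norm
  have hKbdd : Bornology.IsBounded K := by
    refine (Metric.isBounded_closedBall (x := (0 : V →L[ℝ] V)) (r := k)).subset fun M hM => ?_
    rw [mem_closedBall_zero_iff]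
    refine M.opNorm_le_bound k.2 fun t => (hlow _).trans ?_
    exact mul_le_mul_of_nonneg_left (hM t) k.2
  have : ProperSpace (V →L[ℝ] V) := FiniteDimensional.proper ℝ _
  have hK : IsCompact K := Metric.isCompact_of_isClosed_isBounded hKclosed hKbdd
  obtain ⟨M, hM, hmax⟩ := hK.exists_isMaxOn (f := fun M : V →L[ℝ] V => |M.det|)
    ⟨0, fun t => by
      rw [zero_apply, map_zero, norm_zero]
      exact norm_nonneg t⟩ (ContinuousLinearMap.continuous_det.abs.continuousOn)
  have hpos : 0 < |M.det| := by
    let ψ : V →L[ℝ] Y := ⟨φ, hφc⟩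
    have hc : 0 < (‖ψ‖ + 1)⁻¹ := by positivity
    have hmem : ((‖ψ‖ + 1)⁻¹ • ContinuousLinearMap.id ℝ V) ∈ K := by
      intro t
      have h1 : ‖φ t‖ ≤ ‖ψ‖ * ‖t‖ := ψ.le_opNorm t
      have h2 : φ (((‖ψ‖ + 1)⁻¹ • ContinuousLinearMap.id ℝ V) t) = (‖ψ‖ + 1)⁻¹ • φ t := by
        simp
      rw [h2, norm_smul, Real.norm_of_nonneg hc.le, inv_mul_le_iff₀ (by positivity)]
      nlinarith [norm_nonneg t]
    refine lt_of_lt_of_le ?_ (hmax hmem)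
    change 0 < |LinearMap.det ((‖ψ‖ + 1)⁻¹ • (LinearMap.id : V →ₗ[ℝ] V))|
    rw [LinearMap.det_smul]
    simp only [LinearMap.det_id, mul_one, abs_pos]
    positivity
  refine ⟨φ ∘ₗ M, hM, fun D r hr hD => ?_⟩
  have hmem : (r⁻¹ • (M ∘L D.toContinuousLinearMap)) ∈ K := by
    intro t
    have h2 : φ ((r⁻¹ • (M ∘L D.toContinuousLinearMap)) t) = r⁻¹ • φ (M (D t)) := by simp
    rw [h2, norm_smul, Real.norm_of_nonneg (inv_nonneg.2 hr.le), inv_mul_le_iff₀ hr]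
    exact hD t
  have h4 : (r⁻¹ • (M ∘L D.toContinuousLinearMap)).det = r⁻¹ ^ n * (M.det * LinearMap.det D) := by
    change LinearMap.det (r⁻¹ • ((M : V →ₗ[ℝ] V) ∘ₗ D)) = _
    rw [LinearMap.det_smul, LinearMap.det_comp]
    simp [V]
  have h3 : |(r⁻¹ • (M ∘L D.toContinuousLinearMap)).det| ≤ |M.det| := hmax hmem
  rw [h4, abs_mul, abs_mul, abs_of_pos (by positivity : 0 < r⁻¹ ^ n), inv_pow,
    inv_mul_le_iff₀ (by positivity), mul_comm] at h3
  exact le_of_mul_le_mul_right h3 hpos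

theorem det_id_add_smul_starProjection {V : Type*} [NormedAddCommGroup V] [InnerProductSpace ℝ V]
    [FiniteDimensional ℝ V] (K : Submodule ℝ V) (s : ℝ) :
    LinearMap.det (LinearMap.id + s • (K.starProjection : V →ₗ[ℝ] V)) =
      (1 + s) ^ finrank ℝ K := by
  let e := K.prodEquivOfIsCompl _ K.isCompl_orthogonal
  have : (e.symm : V →ₗ[ℝ] K × Kᗮ) ∘ₗ (LinearMap.id + s • (K.starProjection : V →ₗ[ℝ] V)) ∘ₗ
      (e.symm.symm : K × Kᗮ →ₗ[ℝ] V) =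
      LinearMap.prodMap ((1 + s) • LinearMap.id) LinearMap.id := by
    refine LinearMap.ext fun p => e.injective ?_
    obtain ⟨p, q⟩ := p
    have hp : K.starProjection (p : V) = p := Submodule.starProjection_eq_self_iff.2 p.2
    have hq : K.starProjection (q : V) = 0 := K.starProjection_apply_eq_zero_iff.2 q.2
    simp [e, hp, hq, add_smul]
  rw [← LinearMap.det_conj _ e.symm, this, LinearMap.det_prodMap, LinearMap.det_smul]
  simp

theorem le_of_forall_one_add_pow_le {k n : ℕ} {κ : ℝ} (hκ : 0 ≤ κ)
    (h : ∀ s : ℝ, 0 < s → (1 + s) ^ k ≤ (1 + s * κ) ^ n) : (k : ℝ) ≤ n * κ := by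
  by_contra! hlt
  set c : ℝ := n * κ with hc
  have hc0 : 0 ≤ c := by positivity
  set s : ℝ := min (1 / (c + 1)) ((k - c) / (2 * (c ^ 2 + 1))) with hs
  have hs0 : 0 < s := lt_min (by positivity) (div_pos (by linarith) (by positivity))
  have h1 : s * (c + 1) ≤ 1 := by
    rw [← le_div_iff₀ (by positivity)]; exact min_le_left _ _
  have h2 : s * (2 * (c ^ 2 + 1)) ≤ k - c := by
    rw [← le_div_iff₀ (by positivity)]; exact min_le_right _ _
  have h3 : 1 + (k : ℝ) * s ≤ (1 + s) ^ k := one_add_mul_le_pow (by linarith) k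
  have h4 : (1 + s * κ) ^ n ≤ Real.exp (c * s) := by
    calc (1 + s * κ) ^ n ≤ (Real.exp (s * κ)) ^ n := by
          gcongr
          linarith [Real.add_one_le_exp (s * κ)]
      _ = Real.exp (c * s) := by rw [← Real.exp_nat_mul, hc]; ring_nf
  have hcs : |c * s| ≤ 1 := by rw [abs_of_nonneg (by positivity)]; nlinarith
  have h5 := (abs_le.1 (Real.abs_exp_sub_one_sub_id_le hcs)).2
  have h6 : (k - c) * s ≤ (c ^ 2 * s) * s := by nlinarith [h s hs0]
  have h7 := le_of_mul_le_mul_right h6 hs0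
  nlinarith

theorem finrank_le_of_norm_le {n : ℕ} {u : EuclideanSpace ℝ (Fin n) →ₗ[ℝ] Y}
    (hu : ∀ t, ‖u t‖ ≤ ‖t‖)
    (hdet : ∀ (D : EuclideanSpace ℝ (Fin n) →ₗ[ℝ] EuclideanSpace ℝ (Fin n)) (r : ℝ), 0 < r →
      (∀ t, ‖u (D t)‖ ≤ r * ‖t‖) → |LinearMap.det D| ≤ r ^ n)
    {κ : ℝ} (hκ : 0 ≤ κ) (K : Submodule ℝ (EuclideanSpace ℝ (Fin n)))
    (hK : ∀ x ∈ K, ‖u x‖ ≤ κ * ‖x‖) : (finrank ℝ K : ℝ) ≤ n * κ := by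
  refine le_of_forall_one_add_pow_le hκ fun s hs => ?_
  have h1 := hdet (LinearMap.id + s • (K.starProjection : _ →ₗ[ℝ] _)) (1 + s * κ) (by positivity) ?_
  · rw [det_id_add_smul_starProjection, abs_of_pos (by positivity)] at h1
    exact h1
  · intro t
    have h2 : ‖K.starProjection t‖ ≤ ‖t‖ := K.norm_starProjection_apply_le t
    have h3 := hK _ (K.starProjection_apply_mem t)
    calc ‖u (t + s • K.starProjection t)‖
        = ‖u t + s • u (K.starProjection t)‖ := by simp
      _ ≤ ‖u t‖ + s * ‖u (K.starProjection t)‖ := by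
          refine (norm_add_le _ _).trans ?_
          rw [norm_smul, Real.norm_of_nonneg hs.le]
      _ ≤ ‖t‖ + s * (κ * ‖t‖) := by
          gcongr
          · exact hu t
          · exact h3.trans (by gcongr)
      _ = (1 + s * κ) * ‖t‖ := by ring

theorem exists_orthonormal_norm_ge {n : ℕ} {u : EuclideanSpace ℝ (Fin n) →ₗ[ℝ] Y}
    (hu : ∀ t, ‖u t‖ ≤ ‖t‖)
    (hdet : ∀ (D : EuclideanSpace ℝ (Fin n) →ₗ[ℝ] EuclideanSpace ℝ (Fin n)) (r : ℝ), 0 < r →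
      (∀ t, ‖u (D t)‖ ≤ r * ‖t‖) → |LinearMap.det D| ≤ r ^ n)
    {δ : ℝ} (hδ : δ ≤ 1) (N : ℕ) (hN : N < n * δ) :
    ∃ e : Fin N → EuclideanSpace ℝ (Fin n), Orthonormal ℝ e ∧ ∀ i, 1 - δ ≤ ‖u (e i)‖ := by
  induction N with
  | zero => exact ⟨Fin.elim0, by simp, fun i => i.elim0⟩
  | succ N ih =>
    push_cast at hN
    obtain ⟨e, he, hue⟩ := ih (by linarith)
    set S := Submodule.span ℝ (Set.range e) with hS
    obtain ⟨x, hxS, hx⟩ : ∃ x ∈ Sᗮ, (1 - δ) * ‖x‖ < ‖u x‖ := by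
      by_contra! hcon
      have h1 := finrank_le_of_norm_le hu hdet (by linarith) Sᗮ hcon
      have h2 : finrank ℝ S = N := by
        rw [hS, finrank_span_eq_card he.linearIndependent, Fintype.card_fin]
      have h3 := S.finrank_add_finrank_orthogonal
      rw [h2, finrank_euclideanSpace_fin] at h3
      have h4 : (n : ℝ) = N + finrank ℝ Sᗮ := by exact_mod_cast h3.symm
      linarith
    have hx0 : x ≠ 0 := by rintro rfl; simp at hx
    have hxn : 0 < ‖x‖ := norm_pos_iff.2 hx0
    have hex : ∀ i, inner ℝ (e i) x = 0 := fun i =>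
      (Submodule.mem_orthogonal _ _).1 hxS _ (Submodule.subset_span ⟨i, rfl⟩)
    have hxe : ∀ i, inner ℝ x (e i) = 0 := fun i => by rw [real_inner_comm, hex]
    refine ⟨Fin.cons (‖x‖⁻¹ • x) e, ?_, ?_⟩
    · rw [orthonormal_iff_ite] at he ⊢
      intro i j
      induction i using Fin.cases with
      | zero =>
        induction j using Fin.cases with
        | zero =>
          rw [Fin.cons_zero, real_inner_self_eq_norm_sq, norm_smul, norm_inv, norm_norm,
            inv_mul_cancel₀ hxn.ne']
          simp
        | succ j => simp [inner_smul_left, hxe, (Fin.succ_ne_zero j).symm]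
      | succ i =>
        induction j using Fin.cases with
        | zero => simp [inner_smul_right, hex]
        | succ j => simpa using he i j
    · intro i
      induction i using Fin.cases with
      | zero =>
        simp only [Fin.cons_zero, map_smul, norm_smul, norm_inv, norm_norm]
        rw [le_inv_mul_iff₀ hxn]
        linarith
      | succ i => simpa using hue i

/-- A functional of norm at most one has square-summable values on an upper `2`-estimate
sequence. -/
theorem sum_sq_apply_le_one {ι : Type*} [Fintype ι] {w : ι → Y}
    (hw : ∀ c : ι → ℝ, ‖∑ i, c i • w i‖ ^ 2 ≤ ∑ i, c i ^ 2) {g : Y →L[ℝ] ℝ} (hg : ‖g‖ ≤ 1) :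
    ∑ i, g (w i) ^ 2 ≤ 1 := by
  set S := ∑ i, g (w i) ^ 2 with hS
  have h0 : 0 ≤ S := Finset.sum_nonneg fun i _ => sq_nonneg _
  have h1 : S = g (∑ i, g (w i) • w i) := by simp [hS, pow_two]
  have h2 : S ≤ ‖∑ i, g (w i) • w i‖ := by
    rw [h1]
    exact (le_abs_self _).trans ((g.le_opNorm _).trans
      (mul_le_of_le_one_left (norm_nonneg _) hg))
  have h3 := hw fun i => g (w i)
  rw [← hS] at h3
  nlinarith [norm_nonneg (∑ i, g (w i) • w i)]

/-- **Dvoretzky–Rogers lemma.** -/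
theorem exists_dvoretzky_rogers (hY : ¬ FiniteDimensional ℝ Y) (N : ℕ) :
    ∃ w : Fin N → Y, (∀ c : Fin N → ℝ, ‖∑ i, c i • w i‖ ^ 2 ≤ ∑ i, c i ^ 2) ∧
      ∀ (c : Fin N → ℝ) (i : Fin N), |c i| ≤ 2 * ‖∑ j, c j • w j‖ := by
  set δ : ℝ := 1 / (32 * (N + 1)) with hδ
  have hδ0 : 0 < δ := by positivity
  have hδN : δ * (N + 1) = 1 / 32 := by rw [hδ]; field_simp
  have hδ1 : δ ≤ 1 / 32 := by nlinarith [(Nat.cast_nonneg N : (0 : ℝ) ≤ N)]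
  obtain ⟨n, hn⟩ := exists_nat_gt (N / δ)
  rw [div_lt_iff₀ hδ0] at hn
  obtain ⟨u, hu, hdet⟩ := exists_contraction_abs_det_le hY n
  obtain ⟨e, he, hue⟩ := exists_orthonormal_norm_ge hu hdet (by linarith) N hn
  have hw : ∀ c : Fin N → ℝ, ‖∑ i, c i • u (e i)‖ ^ 2 ≤ ∑ i, c i ^ 2 := by
    intro c
    have h1 : ∑ i, c i • u (e i) = u (∑ i, c i • e i) := by simp
    have h2 : ‖∑ i, c i • e i‖ ^ 2 = ∑ i, c i ^ 2 := by
      rw [← real_inner_self_eq_norm_sq, he.inner_sum]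
      simp [pow_two]
    rw [h1, ← h2]
    gcongr
    exact hu _
  refine ⟨fun i => u (e i), hw, fun c i => ?_⟩
  obtain ⟨k, -, hk⟩ := Finset.exists_max_image Finset.univ (fun i => |c i|) ⟨i, Finset.mem_univ i⟩
  refine (hk i (Finset.mem_univ i)).trans ?_
  obtain ⟨g, hg, hgk⟩ := exists_dual_vector'' ℝ (u (e k))
  have hgk' : g (u (e k)) = ‖u (e k)‖ := hgk
  have h1 := sum_sq_apply_le_one hw hg
  rw [← Finset.add_sum_erase _ _ (Finset.mem_univ k), hgk'] at h1
  have h2 : (∑ j ∈ Finset.univ.erase k, |g (u (e j))|) ≤ 1 / 4 := by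
    have h3 := sq_sum_le_card_mul_sum_sq (s := Finset.univ.erase k) (f := fun j => |g (u (e j))|)
    simp only [sq_abs] at h3
    have h4 : ((Finset.univ.erase k).card : ℝ) ≤ N + 1 := by
      have : (Finset.univ.erase k).card ≤ N := by
        simp
      have : ((Finset.univ.erase k).card : ℝ) ≤ N := by exact_mod_cast this
      linarith
    have h5 : ∑ j ∈ Finset.univ.erase k, g (u (e j)) ^ 2 ≤ 2 * δ := by nlinarith [hue k]
    have h6 : ((Finset.univ.erase k).card : ℝ) * ∑ j ∈ Finset.univ.erase k, g (u (e j)) ^ 2 ≤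
        (N + 1) * (2 * δ) := by
      gcongr
    refine abs_le_of_sq_le_sq' (?_ : _ ≤ (1 / 4 : ℝ) ^ 2) (by norm_num) |>.2
    linarith
  have h7 : |∑ j ∈ Finset.univ.erase k, c j * g (u (e j))| ≤ |c k| * (1 / 4) := by
    refine (Finset.abs_sum_le_sum_abs _ _).trans ?_
    calc ∑ j ∈ Finset.univ.erase k, |c j * g (u (e j))|
        ≤ ∑ j ∈ Finset.univ.erase k, |c k| * |g (u (e j))| := by
          refine Finset.sum_le_sum fun j _ => ?_
          rw [abs_mul]
          exact mul_le_mul_of_nonneg_right (hk j (Finset.mem_univ j)) (abs_nonneg _)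
      _ ≤ |c k| * (1 / 4) := by rw [← Finset.mul_sum]; gcongr
  have h8 : |g (∑ j, c j • u (e j))| ≤ ‖∑ j, c j • u (e j)‖ :=
    (g.le_opNorm _).trans (mul_le_of_le_one_left (norm_nonneg _) hg)
  have h9 : g (∑ j, c j • u (e j)) =
      c k * ‖u (e k)‖ + ∑ j ∈ Finset.univ.erase k, c j * g (u (e j)) := by
    rw [map_sum, ← Finset.add_sum_erase _ _ (Finset.mem_univ k)]
    simp [hgk']
  have h10 : |c k| * ‖u (e k)‖ ≤ ‖∑ j, c j • u (e j)‖ + |c k| * (1 / 4) := by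
    calc |c k| * ‖u (e k)‖ = |c k * ‖u (e k)‖| := by rw [abs_mul, abs_norm]
      _ = |g (∑ j, c j • u (e j)) - ∑ j ∈ Finset.univ.erase k, c j * g (u (e j))| := by
          rw [h9]; ring_nf
      _ ≤ _ := (abs_sub _ _).trans (add_le_add h8 h7)
  nlinarith [hue k, abs_nonneg (c k)]

end DvoretzkyRogers

section Dvoretzky

open MeasureTheory Module
open scoped RealInnerProductSpace

variable {X V : Type*} [NormedAddCommGroup X] [NormedSpace ℝ X]
  [NormedAddCommGroup V] [InnerProductSpace ℝ V]

/-- A bounded radial rescaling of the identity. -/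
noncomputable def radialClip (x : V) : V := (1 + ‖x‖)⁻¹ • x

theorem norm_radialClip_le (x : V) : ‖radialClip x‖ ≤ 1 := by
  have h : 0 < 1 + ‖x‖ := by positivity
  rw [radialClip, norm_smul, norm_inv, Real.norm_of_nonneg h.le, inv_mul_le_iff₀ h]
  linarith

theorem continuous_radialClip : Continuous (radialClip : V → V) := by
  unfold radialClip
  refine Continuous.smul (Continuous.inv₀ (by fun_prop) fun x => ?_) continuous_id
  positivity

theorem radialClip_map (R : V ≃ₗᵢ[ℝ] V) (x : V) : radialClip (R x) = R (radialClip x) := by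
  simp [radialClip]

theorem abs_inner_radialClip_le (t x : V) : |⟪t, radialClip x⟫| ≤ ‖t‖ :=
  (abs_real_inner_le_norm _ _).trans
    (mul_le_of_le_one_right (norm_nonneg _) (norm_radialClip_le x))

variable {ι : Type*} [Fintype ι]

/-- The linear map `t ↦ ∑ j, ⟪t, ζ j⟫ • v j` with `ζ j` the clipped sample `ξ j`. -/
noncomputable def sampleMap (v : ι → X) (ξ : ι → V) : V →ₗ[ℝ] X :=
  ∑ j, ((innerₗ V).flip (radialClip (ξ j))).smulRight (v j)

theorem sampleMap_apply (v : ι → X) (ξ : ι → V) (t : V) :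
    sampleMap v ξ t = ∑ j, ⟪t, radialClip (ξ j)⟫ • v j := by
  simp [sampleMap, real_inner_comm]

theorem sampleMap_map (v : ι → X) (ξ : ι → V) (R : V ≃ₗᵢ[ℝ] V) (t : V) :
    sampleMap v (fun j => R (ξ j)) (R t) = sampleMap v ξ t := by
  simp [sampleMap_apply, radialClip_map]

theorem sampleMap_neg (v : ι → X) (ξ : ι → V) (t : V) :
    sampleMap v (fun j => LinearIsometryEquiv.neg ℝ (ξ j)) t = - sampleMap v ξ t := by
  simp only [sampleMap_apply, radialClip_map]
  simp

theorem continuous_norm_add_sampleMap (v : ι → X) (h : X) (t : V) :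
    Continuous fun ξ : ι → V => ‖h + sampleMap v ξ t‖ := by
  simp only [sampleMap_apply]
  have := continuous_radialClip (V := V)
  fun_prop

theorem abs_norm_add_sampleMap_le (v : ι → X) (h : X) (t : V) (ξ : ι → V) :
    |‖h + sampleMap v ξ t‖| ≤ ‖h‖ + ∑ j, ‖t‖ * ‖v j‖ := by
  rw [abs_norm, sampleMap_apply]
  refine (norm_add_le _ _).trans (add_le_add le_rfl ((norm_sum_le _ _).trans ?_))
  refine Finset.sum_le_sum fun j _ => ?_
  rw [norm_smul]
  exact mul_le_mul_of_nonneg_right (abs_inner_radialClip_le _ _) (norm_nonneg _)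

theorem sum_sq_max_norm_sub_le [DecidableEq ι] {v : ι → X}
    (hv : ∀ c : ι → ℝ, ‖∑ i, c i • v i‖ ^ 2 ≤ ∑ i, c i ^ 2) (h : X) (t : V) (ξ : ι → V) (s : V) :
    ∑ i, (max (‖h + sampleMap v ξ t‖ - ‖h + sampleMap v (Function.update ξ i s) t‖) 0) ^ 2 ≤
      4 * ‖t‖ ^ 2 := by
  obtain ⟨g, hg, hgP⟩ := exists_dual_vector'' ℝ (h + sampleMap v ξ t)
  have hgP : g (h + sampleMap v ξ t) = ‖h + sampleMap v ξ t‖ := hgP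
  have key : ∀ i, (max (‖h + sampleMap v ξ t‖ - ‖h + sampleMap v (Function.update ξ i s) t‖) 0) ^ 2
      ≤ 4 * ‖t‖ ^ 2 * g (v i) ^ 2 := by
    intro i
    set c := ⟪t, radialClip (ξ i)⟫ - ⟪t, radialClip s⟫ with hc
    have hcle : |c| ≤ 2 * ‖t‖ := by
      refine (abs_sub _ _).trans ?_
      linarith [abs_inner_radialClip_le t (ξ i), abs_inner_radialClip_le t s]
    have h1 : sampleMap v ξ t - sampleMap v (Function.update ξ i s) t = c • v i := by
      rw [sampleMap_apply, sampleMap_apply, ← Finset.sum_sub_distrib, Finset.sum_eq_single i]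
      · simp [hc, sub_smul]
      · intro j _ hj
        simp [Function.update_of_ne hj]
      · simp
    have h2 : g (h + sampleMap v (Function.update ξ i s) t) ≤
        ‖h + sampleMap v (Function.update ξ i s) t‖ :=
      (le_abs_self _).trans ((g.le_opNorm _).trans (mul_le_of_le_one_left (norm_nonneg _) hg))
    have h3 : ‖h + sampleMap v ξ t‖ - ‖h + sampleMap v (Function.update ξ i s) t‖ ≤ c * g (v i) := by
      have : g (sampleMap v ξ t - sampleMap v (Function.update ξ i s) t) = c * g (v i) := by
        rw [h1]; simp
      rw [← hgP]
      rw [map_sub] at this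
      rw [map_add] at h2 ⊢
      linarith
    have h4 : max (‖h + sampleMap v ξ t‖ - ‖h + sampleMap v (Function.update ξ i s) t‖) 0 ≤
        2 * ‖t‖ * |g (v i)| := by
      refine max_le (h3.trans ((le_abs_self _).trans ?_)) (by positivity)
      rw [abs_mul]
      gcongr
    calc _ ≤ (2 * ‖t‖ * |g (v i)|) ^ 2 := by gcongr
      _ = 4 * ‖t‖ ^ 2 * g (v i) ^ 2 := by rw [mul_pow, mul_pow, sq_abs]; ring
  calc _ ≤ ∑ i, 4 * ‖t‖ ^ 2 * g (v i) ^ 2 := Finset.sum_le_sum fun i _ => key i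
    _ ≤ 4 * ‖t‖ ^ 2 * 1 := by
        rw [← Finset.mul_sum]
        gcongr
        exact sum_sq_apply_le_one hv hg
    _ = _ := mul_one _

variable [FiniteDimensional ℝ V] [MeasurableSpace V] [BorelSpace V]

theorem exists_rotation_invariant_measure (V : Type*) [NormedAddCommGroup V]
    [InnerProductSpace ℝ V] [FiniteDimensional ℝ V] [MeasurableSpace V] [BorelSpace V] :
    ∃ μ : Measure V, IsProbabilityMeasure μ ∧ (∀ R : V ≃ₗᵢ[ℝ] V, MeasurePreserving R μ μ) ∧
      ∀ t : V, ‖t‖ = 1 → 0 < μ {x | 1 / 8 ≤ ⟪t, radialClip x⟫} := by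
  have h0 : volume (Metric.ball (0 : V) 1) ≠ 0 :=
    (Metric.measure_ball_pos volume _ one_pos).ne'
  have htop : volume (Metric.ball (0 : V) 1) ≠ ⊤ := measure_ball_lt_top.ne
  refine ⟨ProbabilityTheory.cond volume (Metric.ball 0 1),
    ProbabilityTheory.cond_isProbabilityMeasure_of_finite h0 htop, fun R => ?_, fun t ht => ?_⟩
  · have h1 := (R.measurePreserving.restrict_preimage (s := Metric.ball (0 : V) 1)
      measurableSet_ball)
    have h2 : R ⁻¹' Metric.ball (0 : V) 1 = Metric.ball 0 1 := by ext; simp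
    rw [h2] at h1
    exact h1.smul_measure _
  · rw [ProbabilityTheory.cond_apply measurableSet_ball]
    refine ENNReal.mul_pos (ENNReal.inv_ne_zero.2 htop) ?_
    have hc : Continuous fun x : V => ⟪t, radialClip x⟫ :=
      continuous_const.inner continuous_radialClip
    have hopen : IsOpen (Metric.ball (0 : V) 1 ∩ {x | 1 / 8 < ⟪t, radialClip x⟫}) :=
      Metric.isOpen_ball.inter (isOpen_lt continuous_const hc)
    refine (lt_of_lt_of_le (hopen.measure_pos volume ⟨(1 / 2 : ℝ) • t, ?_, ?_⟩)
      (measure_mono (Set.inter_subset_inter_right _ (Set.ofPred_subset_ofPred.2 fun x hx => hx.le)))).ne'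
    · simp only [mem_ball_zero_iff, norm_smul, ht]
      norm_num
    · change 1 / 8 < ⟪t, radialClip ((1 / 2 : ℝ) • t)⟫
      simp only [radialClip, norm_smul, ht, inner_smul_right, real_inner_self_eq_norm_sq]
      norm_num

theorem integrable_norm_add_sampleMap (μ : Measure V) [IsProbabilityMeasure μ] (v : ι → X) (h : X)
    (t : V) : Integrable (fun ξ => ‖h + sampleMap v ξ t‖) (Measure.pi fun _ : ι => μ) :=
  integrable_of_measurable_of_abs_le (continuous_norm_add_sampleMap v h t).measurable
    (abs_norm_add_sampleMap_le v h t)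

theorem integral_norm_add_sampleMap_comp {μ : Measure V} [IsProbabilityMeasure μ]
    (hμ : ∀ R : V ≃ₗᵢ[ℝ] V, MeasurePreserving R μ μ) (v : ι → X) (h : X) (t : V)
    (R : V ≃ₗᵢ[ℝ] V) :
    ∫ ξ, ‖h + sampleMap v (fun j => R (ξ j)) t‖ ∂(Measure.pi fun _ : ι => μ) =
      ∫ ξ, ‖h + sampleMap v ξ t‖ ∂(Measure.pi fun _ : ι => μ) := by
  have h1 := measurePreserving_pi (fun _ : ι => μ) (fun _ => μ) (f := fun _ => R) fun _ => hμ R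
  conv_rhs => rw [← h1.map_eq]
  rw [integral_map h1.measurable.aemeasurable
    (continuous_norm_add_sampleMap v h t).aestronglyMeasurable]

theorem integral_norm_sampleMap_eq {μ : Measure V} [IsProbabilityMeasure μ]
    (hμ : ∀ R : V ≃ₗᵢ[ℝ] V, MeasurePreserving R μ μ) (v : ι → X) {t t' : V} (ht : ‖t‖ = ‖t'‖) :
    ∫ ξ, ‖0 + sampleMap v ξ t‖ ∂(Measure.pi fun _ : ι => μ) =
      ∫ ξ, ‖0 + sampleMap v ξ t'‖ ∂(Measure.pi fun _ : ι => μ) := by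
  obtain ⟨R, rfl⟩ : ∃ R : V ≃ₗᵢ[ℝ] V, R t = t' := ⟨_, Submodule.reflection_sub ht⟩
  rw [← integral_norm_add_sampleMap_comp hμ v 0 (R t) R]
  simp only [sampleMap_map]

theorem integral_norm_sampleMap_le {μ : Measure V} [IsProbabilityMeasure μ]
    (hμ : ∀ R : V ≃ₗᵢ[ℝ] V, MeasurePreserving R μ μ) (v : ι → X) (h : X) (t : V) :
    ∫ ξ, ‖0 + sampleMap v ξ t‖ ∂(Measure.pi fun _ : ι => μ) ≤
      ∫ ξ, ‖h + sampleMap v ξ t‖ ∂(Measure.pi fun _ : ι => μ) := by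
  have h1 := integral_norm_add_sampleMap_comp hμ v (-h) t (LinearIsometryEquiv.neg ℝ)
  have h2 : ∀ ξ : ι → V, ‖-h + sampleMap v (fun j => LinearIsometryEquiv.neg ℝ (ξ j)) t‖ =
      ‖h + sampleMap v ξ t‖ := fun ξ => by
    rw [sampleMap_neg, ← neg_add, norm_neg]
  simp only [h2] at h1
  have h3 := integral_mono ((integrable_norm_add_sampleMap μ v 0 t).const_mul 2)
    ((integrable_norm_add_sampleMap μ v h t).add (integrable_norm_add_sampleMap μ v (-h) t))
    fun ξ => (by
      have h4 := norm_add_le (h + sampleMap v ξ t) (-h + sampleMap v ξ t)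
      have h5 : (h + sampleMap v ξ t) + (-h + sampleMap v ξ t) = (2 : ℝ) • (0 + sampleMap v ξ t) := by
        rw [two_smul]; abel
      rw [h5, norm_smul, Real.norm_ofNat] at h4
      exact h4)
  rw [integral_const_mul, integral_add' (integrable_norm_add_sampleMap μ v h t)
    (integrable_norm_add_sampleMap μ v (-h) t), ← h1] at h3
  linarith

theorem pi_eq_map_pi_pi {Ω α β κ : Type*} [MeasurableSpace Ω] [Fintype α] [Fintype β] [Fintype κ]
    (e : κ ≃ α × β) (μ : Measure Ω) [IsProbabilityMeasure μ] :
    Measure.pi (fun _ : κ => μ) = (Measure.pi fun _ : α => Measure.pi fun _ : β => μ).map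
      (fun ω k => ω (e k).1 (e k).2) := by
  refine Measure.pi_eq fun s hs => ?_
  rw [Measure.map_apply (by fun_prop) (MeasurableSet.univ_pi hs)]
  have h : (fun (ω : α → β → Ω) k => ω (e k).1 (e k).2) ⁻¹' (Set.univ.pi s) =
      Set.univ.pi fun i => Set.univ.pi fun l => s (e.symm (i, l)) := by
    ext ω
    simp only [Set.mem_preimage, Set.mem_univ_pi]
    refine ⟨fun h i l => by simpa using h (e.symm (i, l)), fun h k => ?_⟩
    simpa using h (e k).1 (e k).2
  rw [h, Measure.pi_pi]
  simp only [Measure.pi_pi]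
  rw [← Fintype.prod_prod_type' fun i l => μ (s (e.symm (i, l)))]
  exact Equiv.prod_comp e.symm fun k => μ (s k)

theorem pi_real_forall_exists_notMem {Ω α β κ : Type*} [MeasurableSpace Ω] [Fintype α] [Fintype β]
    [Fintype κ] (e : κ ≃ α × β) (μ : Measure Ω) [IsProbabilityMeasure μ] {S : Set Ω}
    (hS : MeasurableSet S) :
    (Measure.pi (fun _ : κ => μ)).real {ξ | ∃ i, ∀ l, ξ (e.symm (i, l)) ∈ S}ᶜ =
      (1 - μ.real S ^ Fintype.card β) ^ Fintype.card α := by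
  have hmeas : MeasurableSet {ξ : κ → Ω | ∃ i, ∀ l, ξ (e.symm (i, l)) ∈ S}ᶜ := by
    refine MeasurableSet.compl ?_
    have : {ξ : κ → Ω | ∃ i, ∀ l, ξ (e.symm (i, l)) ∈ S} =
        ⋃ i, ⋂ l, (fun ξ => ξ (e.symm (i, l))) ⁻¹' S := by ext; simp
    rw [this]
    exact MeasurableSet.iUnion fun i => MeasurableSet.iInter fun l => measurable_pi_apply _ hS
  rw [pi_eq_map_pi_pi e μ, map_measureReal_apply (by fun_prop) hmeas]
  have h : (fun (ω : α → β → Ω) k => ω (e k).1 (e k).2) ⁻¹'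
      {ξ : κ → Ω | ∃ i, ∀ l, ξ (e.symm (i, l)) ∈ S}ᶜ =
      Set.univ.pi fun _ => (Set.univ.pi fun _ => S)ᶜ := by
    ext ω
    simp
  rw [h, measureReal_def, Measure.pi_pi, ENNReal.toReal_prod]
  simp only [← measureReal_def]
  rw [Finset.prod_const, Finset.card_univ,
    probReal_compl_eq_one_sub (MeasurableSet.univ_pi fun _ => hS), measureReal_def, Measure.pi_pi]
  simp [measureReal_def]

theorem exists_le_integral_norm_sampleMap {Y : Type*} [NormedAddCommGroup Y] [NormedSpace ℝ Y]
    (hY : ¬ FiniteDimensional ℝ Y) (μ : Measure V) [IsProbabilityMeasure μ] {t : V}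
    (ht : 0 < μ {x | 1 / 8 ≤ ⟪t, radialClip x⟫}) (a : ℝ) :
    ∃ (L : ℕ) (v : Fin L → Y), (∀ c : Fin L → ℝ, ‖∑ i, c i • v i‖ ^ 2 ≤ ∑ i, c i ^ 2) ∧
      a ≤ ∫ ξ, ‖0 + sampleMap v ξ t‖ ∂(Measure.pi fun _ : Fin L => μ) := by
  set S : Set V := {x | 1 / 8 ≤ ⟪t, radialClip x⟫} with hSdef
  have hS : MeasurableSet S :=
    (isClosed_le continuous_const (continuous_const.inner continuous_radialClip)).measurableSet
  have hp : 0 < μ.real S := ENNReal.toReal_pos ht.ne' (measure_ne_top _ _)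
  obtain ⟨m, hm⟩ := exists_nat_gt ((32 * a) ^ 2 + 1)
  have hm0 : (0 : ℝ) < m := by nlinarith
  have ham : 32 * a ≤ √m := Real.le_sqrt_of_sq_le (by linarith)
  have hsm : 0 < √(m : ℝ) := Real.sqrt_pos.2 hm0
  have hsq : √(m : ℝ) ^ 2 = m := Real.sq_sqrt hm0.le
  obtain ⟨N, hN⟩ := exists_pow_lt_of_lt_one (by norm_num : (0 : ℝ) < 1 / 2)
    (sub_lt_self 1 (pow_pos hp m))
  obtain ⟨w, hw, hw'⟩ := exists_dvoretzky_rogers hY N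
  let e : Fin (N * m) ≃ Fin N × Fin m := finProdFinEquiv.symm
  let v : Fin (N * m) → Y := fun k => (√m)⁻¹ • w (e k).1
  have hsum : ∀ c : Fin (N * m) → ℝ, ∑ k, c k • v k =
      ∑ i, ((√m)⁻¹ * ∑ l, c (e.symm (i, l))) • w i := by
    intro c
    rw [← Equiv.sum_comp e.symm, Fintype.sum_prod_type]
    refine Finset.sum_congr rfl fun i _ => ?_
    simp [v, smul_smul, Finset.mul_sum, Finset.sum_smul, mul_comm]
  refine ⟨N * m, v, fun c => ?_, ?_⟩
  · rw [hsum]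
    refine (hw _).trans ?_
    rw [← Equiv.sum_comp e.symm fun k => c k ^ 2, Fintype.sum_prod_type]
    refine Finset.sum_le_sum fun i _ => ?_
    have h1 := sq_sum_le_card_mul_sum_sq (s := Finset.univ) (f := fun l => c (e.symm (i, l)))
    rw [Finset.card_univ, Fintype.card_fin] at h1
    rw [mul_pow, inv_pow, hsq, inv_mul_le_iff₀ hm0]
    exact h1
  · set P := Measure.pi fun _ : Fin (N * m) => μ with hP
    have h1 := mul_meas_ge_le_integral_of_nonneg (μ := P)
      (f := fun ξ => ‖0 + sampleMap v ξ t‖) (Filter.Eventually.of_forall fun ξ => norm_nonneg _)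
      (integrable_norm_add_sampleMap μ v 0 t) (√m / 16)
    have h2 : {ξ : Fin (N * m) → V | ∃ i, ∀ l, ξ (e.symm (i, l)) ∈ S} ⊆
        {ξ | √m / 16 ≤ ‖0 + sampleMap v ξ t‖} := by
      rintro ξ ⟨i, hi⟩
      change √m / 16 ≤ ‖0 + sampleMap v ξ t‖
      rw [zero_add, sampleMap_apply, hsum]
      have h3 := (le_abs_self _).trans (hw' (fun i => (√m)⁻¹ *
        ∑ l, ⟪t, radialClip (ξ (e.symm (i, l)))⟫) i)
      have h4 : (m : ℝ) * (1 / 8) ≤ ∑ l, ⟪t, radialClip (ξ (e.symm (i, l)))⟫ := by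
        have := Finset.card_nsmul_le_sum Finset.univ
          (fun l => ⟪t, radialClip (ξ (e.symm (i, l)))⟫) (1 / 8) fun l _ => hi l
        simpa using this
      have h5 : √m * (1 / 8) ≤ (√m)⁻¹ * ∑ l, ⟪t, radialClip (ξ (e.symm (i, l)))⟫ := by
        rw [le_inv_mul_iff₀ hsm, ← mul_assoc, ← pow_two, hsq]
        exact h4
      linarith
    have h3 : (1 / 2 : ℝ) ≤ P.real {ξ | √m / 16 ≤ ‖0 + sampleMap v ξ t‖} := by
      refine le_trans ?_ (measureReal_mono h2)
      have h4 := pi_real_forall_exists_notMem e μ hS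
      rw [Fintype.card_fin, Fintype.card_fin] at h4
      have h5 := measureReal_union_le (μ := P)
        {ξ : Fin (N * m) → V | ∃ i, ∀ l, ξ (e.symm (i, l)) ∈ S}
        {ξ : Fin (N * m) → V | ∃ i, ∀ l, ξ (e.symm (i, l)) ∈ S}ᶜ
      rw [Set.union_compl_self, probReal_univ, h4] at h5
      linarith
    nlinarith

theorem exists_sampleMap_concentrated {μ : Measure V} [IsProbabilityMeasure μ]
    (hμ : ∀ R : V ≃ₗᵢ[ℝ] V, MeasurePreserving R μ μ) {L : ℕ} {v : Fin L → X}
    (hv : ∀ c : Fin L → ℝ, ‖∑ i, c i • v i‖ ^ 2 ≤ ∑ i, c i ^ 2) {A η : ℝ} (hA : 0 < A) (hη : 0 < η)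
    (T : Finset V) (hT : ∀ t ∈ T, ‖t‖ = 1)
    (hAT : ∀ t ∈ T, ∫ ξ, ‖0 + sampleMap v ξ t‖ ∂(Measure.pi fun _ : Fin L => μ) = A)
    (K : Finset X) (h0 : (0 : X) ∈ K) (hcard : 4 * (T.card * K.card : ℝ) < (η * A) ^ 2) :
    ∃ u : V →ₗ[ℝ] X, (∀ t, u t ∈ Submodule.span ℝ (Set.range v)) ∧ (∀ t ∈ T, ‖u t‖ ≤ 1 + η) ∧
      ∀ t ∈ T, ∀ k ∈ K, 1 - η ≤ ‖k + u t‖ := by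
  set P := Measure.pi fun _ : Fin L => μ with hP
  let bad : V × X → Set (Fin L → V) := fun p => {ξ | η * A ≤
    |‖A • p.2 + sampleMap v ξ p.1‖ - ∫ ξ, ‖A • p.2 + sampleMap v ξ p.1‖ ∂P|}
  have hηA : 0 < η * A := mul_pos hη hA
  have hbad : ∀ p ∈ T ×ˢ K, P.real (bad p) ≤ 4 / (η * A) ^ 2 := fun p hp =>
    measureReal_abs_sub_integral_ge_le μ (continuous_norm_add_sampleMap v _ _).measurable
      (abs_norm_add_sampleMap_le v _ _)
      (fun ξ s => by
        simpa [hT p.1 (Finset.mem_product.1 hp).1] using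
          sum_sq_max_norm_sub_le hv (A • p.2) p.1 ξ s) hηA
  have hlt : P.real (⋃ p ∈ T ×ˢ K, bad p) < 1 := by
    refine (measureReal_biUnion_finset_le _ _).trans_lt ((Finset.sum_le_sum hbad).trans_lt ?_)
    rw [Finset.sum_const, Finset.card_product, nsmul_eq_mul, ← mul_div_assoc,
      div_lt_one (by positivity)]
    push_cast
    linarith
  obtain ⟨ξ, hξ⟩ : ∃ ξ, ξ ∉ ⋃ p ∈ T ×ˢ K, bad p := by
    by_contra! hcon
    rw [Set.eq_univ_of_forall hcon, probReal_univ] at hlt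
    exact lt_irrefl _ hlt
  have hgood : ∀ t ∈ T, ∀ k ∈ K, |‖A • k + sampleMap v ξ t‖ -
      ∫ ξ, ‖A • k + sampleMap v ξ t‖ ∂P| < η * A := by
    intro t ht k hk
    by_contra! hcon
    exact hξ (Set.mem_biUnion (x := (t, k)) (Finset.mem_product.2 ⟨ht, hk⟩) hcon)
  refine ⟨A⁻¹ • sampleMap v ξ, fun t => ?_, fun t ht => ?_, fun t ht k hk => ?_⟩
  · rw [LinearMap.smul_apply, sampleMap_apply]
    exact Submodule.smul_mem _ _ (Submodule.sum_mem _ fun j _ =>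
      Submodule.smul_mem _ _ (Submodule.subset_span ⟨j, rfl⟩))
  · have h1 := (abs_lt.1 (hgood t ht 0 h0)).2
    simp only [smul_zero] at h1
    rw [hAT t ht, zero_add] at h1
    rw [LinearMap.smul_apply, norm_smul, norm_inv, Real.norm_of_nonneg hA.le,
      inv_mul_le_iff₀ hA]
    linarith
  · have h1 := (abs_lt.1 (hgood t ht k hk)).1
    have h2 := integral_norm_sampleMap_le hμ v (A • k) t
    rw [← hP, hAT t ht] at h2
    have h3 : A • k + sampleMap v ξ t = A • (k + (A⁻¹ • sampleMap v ξ) t) := by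
      rw [LinearMap.smul_apply, smul_add, smul_inv_smul₀ hA.ne']
    have h4 : ‖A • k + sampleMap v ξ t‖ = A * ‖k + (A⁻¹ • sampleMap v ξ) t‖ := by
      rw [h3, norm_smul, Real.norm_of_nonneg hA.le]
    refine le_of_mul_le_mul_left (a := A) ?_ hA
    linarith

/-- **Dvoretzky's theorem**, with the almost isometric copy of Euclidean space chosen inside a
given infinite-dimensional subspace and almost orthogonal to a given finite-dimensional one. -/
theorem exists_almost_isometry_almost_orthogonal {I : Type*} [Fintype I] [Nonempty I]
    {Y : Submodule ℝ X} (hY : ¬ FiniteDimensional ℝ Y) (H : Submodule ℝ X) [FiniteDimensional ℝ H]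
    {δ : ℝ} (hδ : 0 < δ) :
    ∃ u : EuclideanSpace ℝ I →ₗ[ℝ] X, (∀ t, u t ∈ Y) ∧ (∀ t, ‖u t‖ ≤ (1 + δ) * ‖t‖) ∧
      ∀ t, ∀ h ∈ H, ‖t‖ ≤ (1 + δ) * ‖h + u t‖ := by
  wlog hδ1 : δ ≤ 1 generalizing δ
  · obtain ⟨u, hu, hu1, hu2⟩ := this one_pos le_rfl
    refine ⟨u, hu, fun t => (hu1 t).trans ?_, fun t h hh => (hu2 t h hh).trans ?_⟩ <;> gcongr <;>
    linarith
  obtain ⟨μ, hμprob, hμ, hpos⟩ := exists_rotation_invariant_measure (EuclideanSpace ℝ I)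
  obtain ⟨t₀, ht₀⟩ := exists_norm_eq (EuclideanSpace ℝ I) (zero_le_one (α := ℝ))
  set η : ℝ := δ / 10 with hη
  have hη0 : 0 < η := by positivity
  obtain ⟨T, hTsub, hTfin, hTcov⟩ :=
    (isCompact_sphere (0 : EuclideanSpace ℝ I) 1).finite_cover_balls hη0
  have : ProperSpace H := FiniteDimensional.proper ℝ H
  obtain ⟨K, -, hKfin, hKcov⟩ := (isCompact_closedBall (0 : H) 4).finite_cover_balls hη0
  classical
  set K' : Finset X := insert 0 (hKfin.toFinset.image (↑)) with hK'
  obtain ⟨a, ha⟩ := exists_nat_gt (4 * (hTfin.toFinset.card * K'.card : ℝ) / η ^ 2 + 1)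
  have ha1 : (1 : ℝ) ≤ a := le_trans (le_add_of_nonneg_left (by positivity)) ha.le
  obtain ⟨L, v, hv, hav⟩ := exists_le_integral_norm_sampleMap hY μ (hpos t₀ ht₀) a
  set A := ∫ ξ, ‖0 + sampleMap v ξ t₀‖ ∂(Measure.pi fun _ : Fin L => μ) with hA
  have hcoe : ∀ (ξ : Fin L → EuclideanSpace ℝ I) t,
      sampleMap (fun i => (v i : X)) ξ t = (sampleMap v ξ t : Y) := fun ξ t => by
    simp [sampleMap_apply]
  obtain ⟨u, huY, huT, huK⟩ := exists_sampleMap_concentrated (v := fun i => (v i : X)) (A := A)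
    hμ (fun c => by simpa using hv c) (by linarith) hη0 hTfin.toFinset
    (fun t ht => by simpa using hTsub (hTfin.mem_toFinset.1 ht))
    (fun t ht => by
      have ht1 : ‖t‖ = 1 := by simpa using hTsub (hTfin.mem_toFinset.1 ht)
      rw [hA, integral_norm_sampleMap_eq hμ v (ht₀.trans ht1.symm)]
      simp [hcoe])
    K' (Finset.mem_insert_self _ _) (by
      have h1 : 4 * (hTfin.toFinset.card * K'.card : ℝ) / η ^ 2 < a := by linarith
      rw [div_lt_iff₀ (by positivity)] at h1
      rw [mul_pow]
      have h2 : (a : ℝ) ≤ A ^ 2 := by nlinarith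
      linarith [mul_le_mul_of_nonneg_left h2 (sq_nonneg η)])
  have hnet : ∀ t : EuclideanSpace ℝ I, ‖t‖ = 1 → ∃ t' ∈ hTfin.toFinset, ‖t - t'‖ ≤ η := by
    intro t ht
    obtain ⟨t', ht', hd⟩ := Set.mem_iUnion₂.1 (hTcov (by simpa using ht : t ∈ Metric.sphere 0 1))
    exact ⟨t', hTfin.mem_toFinset.2 ht', (mem_ball_iff_norm.1 hd).le⟩
  set U : EuclideanSpace ℝ I →L[ℝ] X := u.toContinuousLinearMap with hU
  have hUle : ∀ t, ‖u t‖ ≤ ‖U‖ * ‖t‖ := fun t => U.le_opNorm t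
  have hU1 : ‖U‖ ≤ (1 + η) + ‖U‖ * η := by
    refine ContinuousLinearMap.opNorm_le_of_unit_norm (by positivity) fun t ht => ?_
    obtain ⟨t', ht', hd⟩ := hnet t ht
    calc ‖U t‖ = ‖u t' + u (t - t')‖ := by rw [← map_add]; simp [hU]
      _ ≤ ‖u t'‖ + ‖u (t - t')‖ := norm_add_le _ _
      _ ≤ (1 + η) + ‖U‖ * η := add_le_add (huT t' ht')
          ((hUle _).trans (mul_le_mul_of_nonneg_left hd (norm_nonneg _)))
  have hU2 : ‖U‖ ≤ 1 + δ := by nlinarith [norm_nonneg U]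
  have hunit : ∀ t, ‖t‖ = 1 → ∀ h ∈ H, 1 ≤ (1 + δ) * ‖h + u t‖ := by
    intro t ht h hh
    rcases le_or_gt ‖h‖ 4 with h4 | h4
    · obtain ⟨k, hk, hd⟩ := Set.mem_iUnion₂.1 (hKcov (by simpa using h4 :
        (⟨h, hh⟩ : H) ∈ Metric.closedBall 0 4))
      have hd' : ‖h - k‖ ≤ η := (mem_ball_iff_norm.1 hd).le
      obtain ⟨t', ht', hdt⟩ := hnet t ht
      have h1 := huK t' ht' k (Finset.mem_insert_of_mem
        (Finset.mem_image_of_mem _ (hKfin.mem_toFinset.2 hk)))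
      have h2 : (k : X) + u t' = (h + u t) - ((h - k) + u (t - t')) := by
        rw [map_sub]; abel
      have h3 : ‖(k : X) + u t'‖ ≤ ‖h + u t‖ + (‖h - k‖ + ‖u (t - t')‖) := by
        rw [h2]
        exact (norm_sub_le _ _).trans (add_le_add le_rfl (norm_add_le _ _))
      have h4 : ‖u (t - t')‖ ≤ 2 * η := (hUle _).trans
        (mul_le_mul (by linarith) hdt (norm_nonneg _) (by norm_num))
      have h5 : 1 - 4 * η ≤ ‖h + u t‖ := by linarith
      nlinarith
    · have h1 : ‖h‖ ≤ ‖h + u t‖ + ‖u t‖ := by simpa using norm_sub_le (h + u t) (u t)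
      have h2 := hUle t
      rw [ht] at h2
      nlinarith
  refine ⟨u, fun t => ?_, fun t => (hUle t).trans (by gcongr), fun t h hh => ?_⟩
  · refine (Submodule.span_le.2 ?_) (huY t)
    rintro _ ⟨i, rfl⟩
    exact (v i).2
  · rcases eq_or_ne t 0 with rfl | ht
    · rw [norm_zero]; positivity
    have htn : 0 < ‖t‖ := norm_pos_iff.2 ht
    have h1 := hunit (‖t‖⁻¹ • t) (by rw [norm_smul, norm_inv, norm_norm, inv_mul_cancel₀ htn.ne'])
      (‖t‖⁻¹ • h) (H.smul_mem _ hh)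
    rw [map_smul, ← smul_add, norm_smul, norm_inv, norm_norm] at h1
    have h2 := mul_le_mul_of_nonneg_left h1 htn.le
    calc ‖t‖ = ‖t‖ * 1 := (mul_one _).symm
      _ ≤ ‖t‖ * ((1 + δ) * (‖t‖⁻¹ * ‖h + u t‖)) := h2
      _ = (1 + δ) * ‖h + u t‖ := by field_simp

end Dvoretzky

section Block

open Module
open scoped RealInnerProductSpace

variable {X : Type*} [NormedAddCommGroup X] [NormedSpace ℝ X]

theorem not_finiteDimensional_ker {κ : Type*} [Finite κ] (hX : ¬ FiniteDimensional ℝ X)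
    (g : X →ₗ[ℝ] (κ → ℝ)) : ¬ FiniteDimensional ℝ (LinearMap.ker g) := by
  intro h
  have : FiniteDimensional ℝ (X ⧸ LinearMap.ker g) :=
    LinearEquiv.finiteDimensional g.quotKerEquivRange.symm
  exact hX (Module.Finite.of_submodule_quotient (LinearMap.ker g))

theorem exists_functional_eq_inner {V : Type*} [NormedAddCommGroup V] [InnerProductSpace ℝ V]
    {H : Submodule ℝ X} {u : V →ₗ[ℝ] X} {r : ℝ} (hr : 0 ≤ r)
    (hu : ∀ t, ∀ h ∈ H, ‖t‖ ≤ r * ‖h + u t‖) (b : V) :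
    ∃ f : X →L[ℝ] ℝ, ‖f‖ ≤ r * ‖b‖ ∧ (∀ h ∈ H, f h = 0) ∧ ∀ t, f (u t) = ⟪b, t⟫ := by
  let Φ : H × V →ₗ[ℝ] X := H.subtype.coprod u
  have hΦ : ∀ p : H × V, Φ p = p.1 + u p.2 := fun p => by simp [Φ]
  have hinj : Function.Injective Φ := by
    rw [← LinearMap.ker_eq_bot, LinearMap.ker_eq_bot']
    rintro ⟨h, t⟩ hp
    have h1 := hu t h h.2
    rw [hΦ] at hp
    have h2 : t = 0 := by
      rw [← norm_le_zero_iff]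
      simpa [hp] using h1
    subst h2
    simpa using hp
  let e := LinearEquiv.ofInjective Φ hinj
  let p : LinearMap.range Φ →ₗ[ℝ] ℝ := (innerₗ V b) ∘ₗ LinearMap.snd ℝ H V ∘ₗ e.symm.toLinearMap
  have hp : ∀ q : H × V, p (e q) = ⟪b, q.2⟫ := fun q => by simp [p]
  have hple : ∀ g, ‖p g‖ ≤ r * ‖b‖ * ‖g‖ := by
    intro g
    obtain ⟨q, rfl⟩ := e.surjective g
    rw [hp]
    have h1 : ‖q.2‖ ≤ r * ‖e q‖ := by
      have := hu q.2 q.1 q.1.2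
      rwa [← hΦ] at this
    calc ‖⟪b, q.2⟫‖ ≤ ‖b‖ * ‖q.2‖ := norm_inner_le_norm _ _
      _ ≤ ‖b‖ * (r * ‖e q‖) := by gcongr
      _ = r * ‖b‖ * ‖e q‖ := by ring
  obtain ⟨f, hf, hfn⟩ := exists_extension_norm_eq (LinearMap.range Φ)
    (p.mkContinuous (r * ‖b‖) hple)
  have hfe : ∀ q, f (Φ q) = ⟪b, q.2⟫ := fun q => (hf (e q)).trans (hp q)
  refine ⟨f, ?_, fun h hh => ?_, fun t => ?_⟩
  · rw [hfn]
    exact LinearMap.mkContinuous_norm_le _ (by positivity) _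
  · simpa [hΦ] using hfe (⟨h, hh⟩, 0)
  · simpa [hΦ] using hfe (0, t)

/-- A unit vector `x₀`, together with a functional `x₀s` equal to one at it, is spread over a
biorthogonal block whose normalized partial sums do not collapse. -/
theorem exists_block (hX : ¬ FiniteDimensional ℝ X) {κ : Type*} [Finite κ]
    (x : κ → X) (xs : κ → X →L[ℝ] ℝ) {x₀ : X} {x₀s : X →L[ℝ] ℝ} (h₀ : ∀ k, xs k x₀ = 0)
    (h₀s : ∀ k, x₀s (x k) = 0) (h₁ : x₀s x₀ = 1) {I : Type*} [Fintype I] [Nonempty I]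
    [DecidableEq I] {ε a : I → ℝ} (hε : ∀ i, 0 < ε i) (hε1 : ∀ i, ε i ≤ 1)
    (ha : ∑ i, a i ^ 2 = 1) (hax : ∀ i, |a i| * ‖x₀‖ ≤ ε i / 8)
    (haxs : ∀ i, |a i| * ‖x₀s‖ ≤ ε i / 8) :
    ∃ (y : I → X) (ys : I → X →L[ℝ] ℝ),
      (∀ i j, ys i (y j) = if i = j then 1 else 0) ∧ (∀ k i, xs k (y i) = 0) ∧
      (∀ k i, ys i (x k) = 0) ∧ (∀ i, ‖y i‖ * ‖ys i‖ < 1 + ε i) ∧ ∑ i, a i • y i = x₀ ∧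
      ∀ A : Finset I, 1 / 2 * (∑ i ∈ A, a i ^ 2 - (∑ i ∈ A, a i ^ 2) ^ 2) ≤
        ‖∑ i ∈ A, a i • y i‖ := by
  obtain ⟨i₀, -, hi₀⟩ := Finset.exists_min_image Finset.univ ε Finset.univ_nonempty
  set δ := ε i₀ / 8 with hδ
  have hδ0 : 0 < δ := by have := hε i₀; positivity
  have hδi : ∀ i, δ ≤ ε i / 8 := fun i => by
    have := hi₀ i (Finset.mem_univ i); rw [hδ]; linarith
  let G : X →ₗ[ℝ] (Option κ → ℝ) := LinearMap.pi fun k => k.elim x₀s.toLinearMap fun k =>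
    (xs k).toLinearMap
  have hGker : ∀ v, v ∈ LinearMap.ker G → x₀s v = 0 ∧ ∀ k, xs k v = 0 := fun v hv =>
    ⟨congrFun hv none, fun k => congrFun hv (some k)⟩
  let H : Submodule ℝ X := Submodule.span ℝ (insert x₀ (Set.range x))
  have : FiniteDimensional ℝ H :=
    FiniteDimensional.span_of_finite ℝ ((Set.finite_range x).insert x₀)
  have hx₀H : x₀ ∈ H := Submodule.subset_span (Set.mem_insert _ _)
  have hxH : ∀ k, x k ∈ H := fun k => Submodule.subset_span (Set.mem_insert_of_mem _ ⟨k, rfl⟩)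
  obtain ⟨u, huY, hu, huH⟩ := exists_almost_isometry_almost_orthogonal (I := I)
    (not_finiteDimensional_ker hX G) H hδ0
  let e : I → EuclideanSpace ℝ I := EuclideanSpace.basisFun I ℝ
  have he : ∀ i j, ⟪e i, e j⟫ = if i = j then 1 else 0 :=
    orthonormal_iff_ite.1 (EuclideanSpace.basisFun I ℝ).orthonormal
  let α : EuclideanSpace ℝ I := ∑ i, a i • e i
  have heα : ∀ i, ⟪e i, α⟫ = a i := fun i => by simp [α, inner_sum, inner_smul_right, he]
  have hαe : ∀ i, ⟪α, e i⟫ = a i := fun i => by rw [real_inner_comm, heα]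
  have hαα : ⟪α, α⟫ = 1 := by
    have h1 : ⟪∑ i, a i • e i, α⟫ = ∑ i, a i ^ 2 := by
      simp [sum_inner, inner_smul_left, heα, pow_two]
    exact h1.trans ha
  let q : I → EuclideanSpace ℝ I := fun i => e i - a i • α
  have hq : ∀ i j, ⟪q i, q j⟫ = (if i = j then 1 else 0) - a i * a j := fun i j => by
    simp only [q, inner_sub_left, inner_sub_right, inner_smul_left, inner_smul_right, he, heα, hαe,
      hαα, conj_trivial]
    ring
  have hqn : ∀ i, ‖q i‖ ≤ 1 := fun i => by
    have h1 : ‖q i‖ ^ 2 = 1 - a i * a i := by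
      rw [← real_inner_self_eq_norm_sq, hq, if_pos rfl]
    nlinarith [norm_nonneg (q i), mul_self_nonneg (a i)]
  choose f hf hfH hfu using fun i => exists_functional_eq_inner (by positivity) huH (q i)
  have hxu : ∀ t, x₀s (u t) = 0 := fun t => (hGker _ (huY t)).1
  have hsum : ∀ A : Finset I, ∑ i ∈ A, a i • (a i • x₀ + u (q i)) =
      (∑ i ∈ A, a i ^ 2) • x₀ + u (∑ i ∈ A, a i • e i - (∑ i ∈ A, a i ^ 2) • α) := by
    intro A
    simp only [q, smul_add, Finset.sum_add_distrib, map_sub, map_sum, map_smul, smul_sub,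
      Finset.sum_sub_distrib, Finset.sum_smul, smul_smul, pow_two]
  refine ⟨fun i => a i • x₀ + u (q i), fun i => a i • x₀s + f i, fun i j => ?_, fun k i => ?_,
    fun k i => ?_, fun i => ?_, ?_, fun A => ?_⟩
  · simp [h₁, hxu, hfH i _ hx₀H, hfu, hq]
  · simp [h₀, (hGker _ (huY _)).2]
  · simp [h₀s, hfH i _ (hxH k)]
  · have h1 : ‖a i • x₀ + u (q i)‖ ≤ 1 + ε i / 4 := by
      refine (norm_add_le _ _).trans ?_
      rw [norm_smul, Real.norm_eq_abs]
      nlinarith [hax i, hu (q i), hqn i, hδi i, norm_nonneg (q i)]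
    have h2 : ‖a i • x₀s + f i‖ ≤ 1 + ε i / 4 := by
      refine (norm_add_le _ _).trans ?_
      rw [norm_smul, Real.norm_eq_abs]
      nlinarith [haxs i, hf i, hqn i, hδi i, norm_nonneg (q i)]
    calc _ ≤ (1 + ε i / 4) * (1 + ε i / 4) :=
          mul_le_mul h1 h2 (norm_nonneg _) (by linarith [hε i])
      _ < 1 + ε i := by nlinarith [hε i, hε1 i]
  · rw [hsum, ha, one_smul, one_smul, sub_self, map_zero, add_zero]
  · rw [hsum]
    set s := ∑ i ∈ A, a i ^ 2 with hs
    set t := ∑ i ∈ A, a i • e i - s • α with ht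
    have h1 := huH t (s • x₀) (H.smul_mem _ hx₀H)
    have h2 : ‖t‖ ^ 2 = s - s ^ 2 := by
      have h3 : ⟪∑ i ∈ A, a i • e i, α⟫ = s := by
        simp [sum_inner, inner_smul_left, heα, hs, pow_two]
      have h4 : ⟪∑ i ∈ A, a i • e i, ∑ i ∈ A, a i • e i⟫ = s := by
        simp only [sum_inner, inner_sum, inner_smul_left, inner_smul_right, he, hs, pow_two,
          conj_trivial]
        refine Finset.sum_congr rfl fun i hi => ?_
        simp [hi]
      rw [← real_inner_self_eq_norm_sq, ht, inner_sub_left, inner_sub_right, inner_sub_right,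
        inner_smul_left, inner_smul_left, inner_smul_right, inner_smul_right, h3, h4, hαα,
        real_inner_comm, h3]
      simp
      ring
    have h5 : ‖t‖ ≤ 1 := by nlinarith [norm_nonneg t, sq_nonneg (s - 1 / 2)]
    have h6 : δ ≤ 1 := by linarith [hδi i₀, hε1 i₀]
    nlinarith [norm_nonneg t, norm_nonneg (s • x₀ + u t)]

end Block

section Helly

variable {X : Type*} [NormedAddCommGroup X] [NormedSpace ℝ X]

/-- **Helly's theorem**: a bidual element acts on finitely many functionals as an element of the
space of almost the same norm. -/
theorem exists_apply_eq_bidual_apply {κ : Type*} [Finite κ] (φ : κ → X →L[ℝ] ℝ)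
    (G : (X →L[ℝ] ℝ) →L[ℝ] ℝ) {r : ℝ} (hr : ‖G‖ < r) :
    ∃ x : X, (∀ k, φ k x = G (φ k)) ∧ ‖x‖ < r := by
  have := Fintype.ofFinite κ
  classical
  let Φ : X →ₗ[ℝ] (κ → ℝ) := LinearMap.pi fun k => (φ k).toLinearMap
  obtain ⟨x₀, hx₀⟩ : (fun k => G (φ k)) ∈ LinearMap.range Φ := by
    by_contra hcon
    obtain ⟨f, hf, hle⟩ := Submodule.exists_le_ker_of_notMem hcon
    have hexp : ∀ c : κ → ℝ, f c = ∑ k, f (Pi.single k 1) * c k := fun c => by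
      conv_lhs => rw [← LinearMap.sum_single_apply (fun _ : κ => ℝ) c]
      rw [map_sum]
      refine Finset.sum_congr rfl fun k _ => ?_
      rw [mul_comm, ← smul_eq_mul, ← map_smul]
      congr 1
      ext j
      by_cases h : k = j <;> simp [h, eq_comm]
    have h0 : ∑ k, f (Pi.single k 1) • φ k = 0 := by
      ext x
      have h1 : f (Φ x) = 0 := hle ⟨x, rfl⟩
      rw [hexp] at h1
      simpa [Φ] using h1
    refine hf ?_
    rw [hexp]
    simpa using congrArg G h0
  have hx₀' : ∀ k, φ k x₀ = G (φ k) := fun k => congrFun hx₀ k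
  let N := LinearMap.ker Φ
  have hN : ∀ n, n ∈ N ↔ ∀ k, φ k n = 0 := fun n => by
    rw [LinearMap.mem_ker]; exact funext_iff
  obtain ⟨g, hg, hgx⟩ := exists_dual_vector'' ℝ (Submodule.Quotient.mk x₀ : X ⧸ N)
  have hgx : g (Submodule.Quotient.mk x₀ : X ⧸ N) = ‖(Submodule.Quotient.mk x₀ : X ⧸ N)‖ := hgx
  have hbound : ∀ x : X, ‖(g.toLinearMap ∘ₗ N.mkQ) x‖ ≤ 1 * ‖x‖ := fun x =>
    (g.le_opNorm _).trans (mul_le_mul hg (Submodule.Quotient.norm_mk_le N x) (norm_nonneg _)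
      zero_le_one)
  let F : X →L[ℝ] ℝ := (g.toLinearMap ∘ₗ N.mkQ).mkContinuous 1 hbound
  have hFn : ‖F‖ ≤ 1 := LinearMap.mkContinuous_norm_le _ zero_le_one _
  have hFx : ∀ x, F x = g (Submodule.Quotient.mk x) := fun x => rfl
  have hspan : F.toLinearMap ∈ Submodule.span ℝ (Set.range fun k => (φ k).toLinearMap) := by
    refine mem_span_of_iInf_ker_le_ker fun n hn => ?_
    have hnN : n ∈ N := (hN n).2 fun k => (Submodule.mem_iInf _).1 hn k
    change g (Submodule.Quotient.mk n) = 0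
    rw [(Submodule.Quotient.mk_eq_zero N).2 hnN, map_zero]
  obtain ⟨c, hc⟩ := (Submodule.mem_span_range_iff_exists_fun ℝ).1 hspan
  have hF : F = ∑ k, c k • φ k := by
    ext x
    simpa using (LinearMap.congr_fun hc x).symm
  have hGF : G F = F x₀ := by
    rw [hF]
    simp [hx₀']
  have hlt : ‖(Submodule.Quotient.mk x₀ : X ⧸ N)‖ < r := by
    rw [← hgx, ← hFx, ← hGF]
    refine lt_of_le_of_lt ((le_abs_self _).trans (G.le_opNorm F)) (lt_of_le_of_lt ?_ hr)
    exact mul_le_of_le_one_right (norm_nonneg _) hFn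
  obtain ⟨x, hx, hxn⟩ := Submodule.Quotient.norm_mk_lt (Submodule.Quotient.mk x₀ : X ⧸ N)
    (sub_pos.2 hlt)
  refine ⟨x, fun k => ?_, by linarith⟩
  have h1 := (hN _).1 ((Submodule.Quotient.eq N).1 hx) k
  rw [map_sub, sub_eq_zero] at h1
  rw [h1, hx₀']

theorem not_finiteDimensional_strongDual (hX : ¬ FiniteDimensional ℝ X) :
    ¬ FiniteDimensional ℝ (X →L[ℝ] ℝ) := fun _ =>
  hX (FiniteDimensional.of_injective
    (NormedSpace.inclusionInDoubleDualLi (E := X) ℝ).toLinearMap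
    (NormedSpace.inclusionInDoubleDualLi (E := X) ℝ).injective)

end Helly

section Extension

variable {α : Type*} {X : Type*} [NormedAddCommGroup X] [NormedSpace ℝ X]

/-- Overwrite a sequence on a finite set of indices. -/
def splice {s : Finset ℕ} (y : s → α) (x : ℕ → α) (j : ℕ) : α :=
  if h : j ∈ s then y ⟨j, h⟩ else x j

theorem splice_of_mem {s : Finset ℕ} (y : s → α) (x : ℕ → α) {j : ℕ} (h : j ∈ s) :
    splice y x j = y ⟨j, h⟩ :=
  dif_pos h

theorem splice_of_lt {n n' : ℕ} (y : Finset.Ico n n' → α) (x : ℕ → α) {j : ℕ} (h : j < n) :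
    splice y x j = x j :=
  dif_neg fun hj => absurd (Finset.mem_Ico.1 hj).1 (not_le.2 h)

/-- The first `n` terms of `x` and `xs` are biorthogonal with `‖x i‖ * ‖xs i‖ ≤ 1 + ε i`. -/
structure IsBiorthogonalBelow (ε : ℕ → ℝ) (n : ℕ) (x : ℕ → X) (xs : ℕ → X →L[ℝ] ℝ) : Prop where
  apply_eq : ∀ i < n, ∀ j < n, xs i (x j) = if i = j then 1 else 0
  norm_mul_le : ∀ i < n, ‖x i‖ * ‖xs i‖ ≤ 1 + ε i

theorem IsBiorthogonalBelow.splice {ε : ℕ → ℝ} {n n' : ℕ} {x : ℕ → X} {xs : ℕ → X →L[ℝ] ℝ}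
    (h : IsBiorthogonalBelow ε n x xs) {y : Finset.Ico n n' → X}
    {ys : Finset.Ico n n' → X →L[ℝ] ℝ} (hyy : ∀ i j, ys i (y j) = if i = j then 1 else 0)
    (hxy : ∀ k < n, ∀ i, xs k (y i) = 0) (hyx : ∀ k < n, ∀ i, ys i (x k) = 0)
    (hy : ∀ i, ‖y i‖ * ‖ys i‖ ≤ 1 + ε i) :
    IsBiorthogonalBelow ε n' (splice y x) (splice ys xs) := by
  have hmem : ∀ i < n', ¬ i < n → i ∈ Finset.Ico n n' := fun i h1 h2 =>
    Finset.mem_Ico.2 ⟨not_lt.1 h2, h1⟩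
  refine ⟨fun i hi j hj => ?_, fun i hi => ?_⟩
  · by_cases hin : i < n <;> by_cases hjn : j < n
    · rw [splice_of_lt _ _ hin, splice_of_lt _ _ hjn, h.apply_eq i hin j hjn]
    · rw [splice_of_lt _ _ hin, splice_of_mem _ _ (hmem j hj hjn), hxy i hin, if_neg (by omega)]
    · rw [splice_of_lt _ _ hjn, splice_of_mem _ _ (hmem i hi hin), hyx j hjn, if_neg (by omega)]
    · rw [splice_of_mem _ _ (hmem i hi hin), splice_of_mem _ _ (hmem j hj hjn), hyy]
      simp
  · by_cases hin : i < n
    · rw [splice_of_lt _ _ hin, splice_of_lt _ _ hin]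
      exact h.norm_mul_le i hin
    · rw [splice_of_mem _ _ (hmem i hi hin), splice_of_mem _ _ (hmem i hi hin)]
      exact hy _

theorem exists_le_sum_sq_Ico {ε : ℕ → ℝ} (hsq : ¬ Summable fun n => ε n ^ 2) (n : ℕ) (M : ℝ) :
    ∃ n', n < n' ∧ M ≤ ∑ i ∈ Finset.Ico n n', ε i ^ 2 := by
  have h1 := (not_summable_iff_tendsto_nat_atTop_of_nonneg fun i => sq_nonneg (ε i)).1 hsq
  obtain ⟨n', h2, h3⟩ := ((h1.eventually_ge_atTop (M + ∑ i ∈ Finset.range n, ε i ^ 2)).and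
    (Filter.eventually_gt_atTop n)).exists
  refine ⟨n', h3, ?_⟩
  rw [Finset.sum_Ico_eq_sub _ h3.le]
  linarith

/-- A normalized multiple of `ε` on a long enough interval of indices. -/
theorem exists_flat_coefficients {ε : ℕ → ℝ} (hε : ∀ i, 0 < ε i) (hε1 : ∀ i, ε i ≤ 1)
    (hsq : ¬ Summable fun n => ε n ^ 2) (n : ℕ) (M : ℝ) :
    ∃ n', n < n' ∧ ∃ a : ℕ → ℝ, (∀ i, 0 < a i) ∧ ∑ i ∈ Finset.Ico n n', a i ^ 2 = 1 ∧
      ∀ i, a i * M ≤ ε i / 8 ∧ a i ^ 2 ≤ 1 / 2 := by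
  obtain ⟨n', hn', hsum⟩ := exists_le_sum_sq_Ico hsq n ((8 * (|M| + 1)) ^ 2)
  set S := ∑ i ∈ Finset.Ico n n', ε i ^ 2 with hS
  have hM : 0 ≤ |M| := abs_nonneg M
  have hR : 8 * (|M| + 1) ≤ √S := Real.le_sqrt_of_sq_le hsum
  have hR0 : 0 < √S := by linarith
  have hRS : √S ^ 2 = S := Real.sq_sqrt (le_trans (sq_nonneg _) hsum)
  refine ⟨n', hn', fun i => ε i / √S, fun i => div_pos (hε i) hR0, ?_, fun i => ⟨?_, ?_⟩⟩
  · simp only [div_pow]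
    rw [← Finset.sum_div, hRS, ← hS, div_self]
    nlinarith
  · rw [div_mul_eq_mul_div, div_le_iff₀ hR0]
    nlinarith [hε i, le_abs_self M]
  · rw [div_pow, div_le_iff₀ (by positivity)]
    nlinarith [hε i, hε1 i]

variable {ε : ℕ → ℝ} {n : ℕ} {x : ℕ → X} {xs : ℕ → X →L[ℝ] ℝ}

theorem IsBiorthogonalBelow.apply_sub_sum (h : IsBiorthogonalBelow ε n x xs) (v : X) {k : ℕ}
    (hk : k < n) : xs k (v - ∑ i ∈ Finset.range n, xs i v • x i) = 0 := by
  rw [map_sub, map_sum, Finset.sum_eq_single k]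
  · simp [h.apply_eq k hk k hk]
  · intro j hj hjk
    simp [h.apply_eq k hk j (Finset.mem_range.1 hj), hjk.symm]
  · intro hk'
    exact absurd (Finset.mem_range.2 hk) hk'

theorem IsBiorthogonalBelow.sub_sum_apply (h : IsBiorthogonalBelow ε n x xs) (f : X →L[ℝ] ℝ)
    {k : ℕ} (hk : k < n) : (f - ∑ i ∈ Finset.range n, f (x i) • xs i) (x k) = 0 := by
  rw [sub_apply, sum_apply, Finset.sum_eq_single k]
  · simp [h.apply_eq k hk k hk]
  · intro j hj hjk
    simp [h.apply_eq j (Finset.mem_range.1 hj) k hk, hjk]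
  · intro hk'
    exact absurd (Finset.mem_range.2 hk) hk'

/-- A coefficient sequence on the first `n` terms of `x` whose full sum is small while its balanced
partial sums are not. -/
def HasFlatVector (τ : ℝ) (n : ℕ) (x : ℕ → X) : Prop :=
  ∃ a : ℕ → ℝ, (∀ i, n ≤ i → a i = 0) ∧ ∑ i ∈ Finset.range n, a i ^ 2 = 1 ∧
    (∀ i, a i ^ 2 ≤ 1 / 2) ∧ ‖∑ i ∈ Finset.range n, a i • x i‖ ≤ τ ∧
    ∀ A ⊆ Finset.range n, 1 / 2 * (∑ i ∈ A, a i ^ 2 - (∑ i ∈ A, a i ^ 2) ^ 2) ≤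
      ‖∑ i ∈ A, a i • x i‖

theorem HasFlatVector.congr {τ : ℝ} {x' : ℕ → X} (h : HasFlatVector τ n x)
    (hx : ∀ i < n, x' i = x i) : HasFlatVector τ n x' := by
  obtain ⟨a, h1, h2, h3, h4, h5⟩ := h
  have key : ∀ A ⊆ Finset.range n, ∑ i ∈ A, a i • x' i = ∑ i ∈ A, a i • x i := fun A hA =>
    Finset.sum_congr rfl fun i hi => by rw [hx i (Finset.mem_range.1 (hA hi))]
  refine ⟨a, h1, h2, h3, ?_, fun A hA => ?_⟩
  · rwa [key _ subset_rfl]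
  · rw [key A hA]
    exact h5 A hA

theorem exists_ne_zero_annihilated_mem_span (hX : ¬ FiniteDimensional ℝ X)
    (h : ∀ v, ∀ k < n, xs k (v - ∑ i ∈ Finset.range n, xs i v • x i) = 0) (v : X) :
    ∃ x₀ : X, x₀ ≠ 0 ∧ (∀ k < n, xs k x₀ = 0) ∧
      v ∈ Submodule.span ℝ (insert x₀ (x '' Set.Iio n)) := by
  have hmem : ∑ i ∈ Finset.range n, xs i v • x i ∈ Submodule.span ℝ (x '' Set.Iio n) :=
    Submodule.sum_mem _ fun i hi => Submodule.smul_mem _ _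
      (Submodule.subset_span ⟨i, Finset.mem_range.1 hi, rfl⟩)
  by_cases h0 : v - ∑ i ∈ Finset.range n, xs i v • x i = 0
  · let G : X →ₗ[ℝ] (Fin n → ℝ) := LinearMap.pi fun k => (xs k).toLinearMap
    obtain ⟨w, hw, hw0⟩ : ∃ w ∈ LinearMap.ker G, w ≠ 0 := by
      refine Submodule.exists_mem_ne_zero_of_ne_bot fun hbot => ?_
      have := not_finiteDimensional_ker hX G
      rw [hbot] at this
      exact this inferInstance
    refine ⟨w, hw0, fun k hk => congrFun hw ⟨k, hk⟩, ?_⟩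
    rw [sub_eq_zero] at h0
    rw [h0]
    exact Submodule.span_mono (Set.subset_insert _ _) hmem
  · refine ⟨_, h0, fun k hk => h v k hk, ?_⟩
    have h2 := Submodule.add_mem _ (Submodule.subset_span (R := ℝ)
      (Set.mem_insert (v - ∑ i ∈ Finset.range n, xs i v • x i) (x '' Set.Iio n)))
      (Submodule.span_mono (Set.subset_insert _ _) hmem)
    rwa [sub_add_cancel] at h2

theorem mem_span_splice {E : Type*} [AddCommGroup E] [Module ℝ E] {n n' : ℕ} (hn : n ≤ n')
    {x : ℕ → E} {y : Finset.Ico n n' → E} {x₀ v : E}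
    (hv : v ∈ Submodule.span ℝ (insert x₀ (x '' Set.Iio n))) {a : Finset.Ico n n' → ℝ} {c : ℝ}
    (hc : c ≠ 0) (hy : ∑ i, a i • y i = c • x₀) :
    v ∈ Submodule.span ℝ (splice y x '' Set.Iio n') := by
  refine Submodule.span_le.2 (Set.insert_subset ?_ ?_) hv
  · have h1 : x₀ = c⁻¹ • ∑ i, a i • y i := by rw [hy, smul_smul, inv_mul_cancel₀ hc, one_smul]
    rw [h1]
    refine Submodule.smul_mem _ _ (Submodule.sum_mem _ fun i _ => Submodule.smul_mem _ _
      (Submodule.subset_span ⟨i, (Finset.mem_Ico.1 i.2).2, ?_⟩))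
    rw [splice_of_mem _ _ i.2]
  · rintro _ ⟨k, hk, rfl⟩
    exact Submodule.subset_span ⟨k, lt_of_lt_of_le hk hn, splice_of_lt _ _ hk⟩

theorem sum_eq_sum_subtype_of_eq_zero {E : Type*} [AddCommMonoid E] {s : Finset ℕ} {g : ℕ → E}
    (hg : ∀ i ∉ s, g i = 0) (A : Finset ℕ) :
    ∑ i ∈ A, g i = ∑ i ∈ A.subtype (· ∈ s), g i := by
  rw [Finset.sum_subtype_eq_sum_filter]
  refine (Finset.sum_subset (Finset.filter_subset _ _) fun i hi hi' => hg i fun his => ?_).symm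
  exact hi' (Finset.mem_filter.2 ⟨hi, his⟩)

/-- Coefficients on the new block of a spliced sequence give a flat vector. -/
theorem hasFlatVector_splice {τ : ℝ} {n' : ℕ} {y : Finset.Ico n n' → X} {a : ℕ → ℝ}
    (ha : ∑ i ∈ Finset.Ico n n', a i ^ 2 = 1) (ha2 : ∀ i, a i ^ 2 ≤ 1 / 2)
    (hτ : ‖∑ i : Finset.Ico n n', a i • y i‖ ≤ τ)
    (hA : ∀ A : Finset (Finset.Ico n n'), 1 / 2 * (∑ i ∈ A, a i ^ 2 - (∑ i ∈ A, a i ^ 2) ^ 2) ≤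
      ‖∑ i ∈ A, a i • y i‖) (x : ℕ → X) :
    HasFlatVector τ n' (splice y x) := by
  classical
  let b : ℕ → ℝ := fun i => if i ∈ Finset.Ico n n' then a i else 0
  have hb : ∀ i ∉ Finset.Ico n n', b i = 0 := fun i hi => if_neg hi
  have hb' : ∀ i : Finset.Ico n n', b i = a i := fun i => if_pos i.2
  have hsq : ∀ A : Finset ℕ, ∑ i ∈ A, b i ^ 2 =
      ∑ i ∈ A.subtype (· ∈ Finset.Ico n n'), a i ^ 2 := fun A => by
    rw [sum_eq_sum_subtype_of_eq_zero (s := Finset.Ico n n') fun i hi => by simp [hb i hi]]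
    simp only [hb']
  have hsum : ∀ A : Finset ℕ, ∑ i ∈ A, b i • splice y x i =
      ∑ i ∈ A.subtype (· ∈ Finset.Ico n n'), a i • y i := fun A => by
    rw [sum_eq_sum_subtype_of_eq_zero (s := Finset.Ico n n') fun i hi => by simp [hb i hi]]
    exact Finset.sum_congr rfl fun i _ => by rw [hb', splice_of_mem _ _ i.2]
  have huniv : (Finset.range n').subtype (· ∈ Finset.Ico n n') = Finset.univ := by
    refine Finset.eq_univ_of_forall fun i => Finset.mem_subtype.2 ?_
    exact Finset.mem_range.2 (Finset.mem_Ico.1 i.2).2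
  refine ⟨b, fun i hi => hb i fun h => absurd (Finset.mem_Ico.1 h).2 (not_lt.2 hi), ?_, ?_, ?_,
    fun A _ => ?_⟩
  · rw [hsq, huniv, ← ha]
    exact Finset.sum_coe_sort (Finset.Ico n n') fun i => a i ^ 2
  · intro i
    by_cases hi : i ∈ Finset.Ico n n'
    · simpa only [b, if_pos hi] using ha2 i
    · rw [hb i hi]
      norm_num
  · rw [hsum, huniv]
    exact hτ
  · rw [hsq, hsum]
    exact hA _

/-- Extend a finite biorthogonal system so that its span captures a given vector and carries a
flat vector. -/
theorem IsBiorthogonalBelow.exists_extension_mem_span (hX : ¬ FiniteDimensional ℝ X)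
    (hε : ∀ i, 0 < ε i) (hε1 : ∀ i, ε i ≤ 1) (hsq : ¬ Summable fun n => ε n ^ 2)
    (h : IsBiorthogonalBelow ε n x xs) (v : X) {τ : ℝ} (hτ : 0 < τ) :
    ∃ n' z zs, n < n' ∧ (∀ i < n, z i = x i ∧ zs i = xs i) ∧
      IsBiorthogonalBelow ε n' z zs ∧ v ∈ Submodule.span ℝ (z '' Set.Iio n') ∧
      HasFlatVector τ n' z := by
  obtain ⟨w, hw0, hw, hv⟩ := exists_ne_zero_annihilated_mem_span hX
    (fun v k hk => h.apply_sub_sum v hk) v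
  have hwn : 0 < ‖w‖ := norm_pos_iff.2 hw0
  set c := τ / ‖w‖ with hc
  have hc0 : 0 < c := div_pos hτ hwn
  obtain ⟨g, -, hg⟩ := exists_dual_vector ℝ w hwn.ne'
  let f : X →L[ℝ] ℝ := (c * ‖w‖)⁻¹ • g
  have hf : f (c • w) = 1 := by
    simp only [f, smul_apply, map_smul, hg, smul_eq_mul, RCLike.ofReal_real_eq_id, id]
    field_simp
  have hw' : ∀ k < n, xs k (c • w) = 0 := fun k hk => by rw [map_smul, hw k hk, smul_zero]
  set fs := f - ∑ i ∈ Finset.range n, f (x i) • xs i with hfs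
  have hfs1 : fs (c • w) = 1 := by
    rw [hfs, sub_apply, sum_apply, Finset.sum_eq_zero, hf, sub_zero]
    intro i hi
    rw [smul_apply, hw' i (Finset.mem_range.1 hi), smul_zero]
  obtain ⟨n', hn', a, ha0, ha, haM⟩ :=
    exists_flat_coefficients hε hε1 hsq n (max ‖c • w‖ ‖fs‖)
  have : Nonempty (Finset.Ico n n') := ⟨⟨n, Finset.mem_Ico.2 ⟨le_rfl, hn'⟩⟩⟩
  obtain ⟨y, ys, hyy, hxy, hyx, hynorm, hysum, hyA⟩ := exists_block hX (fun k : Fin n => x k)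
    (fun k : Fin n => xs k) (x₀ := c • w) (x₀s := fs) (fun k => hw' k k.2)
    (fun k => h.sub_sum_apply f k.2) hfs1 (I := Finset.Ico n n') (ε := fun i => ε i)
    (a := fun i => a i) (fun i => hε i) (fun i => hε1 i)
    ((Finset.sum_coe_sort (Finset.Ico n n') fun i => a i ^ 2).trans ha)
    (fun i => by
      rw [abs_of_pos (ha0 i)]
      exact (mul_le_mul_of_nonneg_left (le_max_left _ _) (ha0 i).le).trans (haM i).1)
    (fun i => by
      rw [abs_of_pos (ha0 i)]
      exact (mul_le_mul_of_nonneg_left (le_max_right _ _) (ha0 i).le).trans (haM i).1)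
  refine ⟨n', _, _, hn', fun i hi => ⟨splice_of_lt y x hi, splice_of_lt ys xs hi⟩,
    h.splice hyy (fun k hk i => hxy ⟨k, hk⟩ i) (fun k hk i => hyx ⟨k, hk⟩ i)
      fun i => (hynorm i).le, mem_span_splice hn'.le hv hc0.ne' hysum,
    hasFlatVector_splice ha (fun i => (haM i).2) ?_ hyA x⟩
  rw [hysum, norm_smul, Real.norm_of_nonneg hc0.le, hc, div_mul_cancel₀ _ hwn.ne']

/-- Extend a finite biorthogonal system so that the span of its functionals captures a given
functional. -/
theorem IsBiorthogonalBelow.exists_extension_dual_mem_span (hX : ¬ FiniteDimensional ℝ X)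
    (hε : ∀ i, 0 < ε i) (hε1 : ∀ i, ε i ≤ 1) (hsq : ¬ Summable fun n => ε n ^ 2)
    (h : IsBiorthogonalBelow ε n x xs) (f : X →L[ℝ] ℝ) :
    ∃ n' z zs, n < n' ∧ (∀ i < n, z i = x i ∧ zs i = xs i) ∧
      IsBiorthogonalBelow ε n' z zs ∧ f ∈ Submodule.span ℝ (zs '' Set.Iio n') := by
  let J := NormedSpace.inclusionInDoubleDual ℝ X
  obtain ⟨g, hg0, hg, hf⟩ := exists_ne_zero_annihilated_mem_span (x := xs) (xs := fun i => J (x i))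
    (not_finiteDimensional_strongDual hX) (fun f k hk => h.sub_sum_apply f hk) f
  obtain ⟨u, hu⟩ : ∃ u, g u ≠ 0 := by
    by_contra! hall
    exact hg0 (ContinuousLinearMap.ext hall)
  set v := (g u)⁻¹ • u with hv
  have hgv : g v = 1 := by rw [hv, map_smul, smul_eq_mul, inv_mul_cancel₀ hu]
  set w := v - ∑ i ∈ Finset.range n, xs i v • x i with hw
  have hgw : g w = 1 := by
    rw [hw, map_sub, map_sum, Finset.sum_eq_zero, hgv, sub_zero]
    intro i hi
    have : g (x i) = 0 := hg i (Finset.mem_range.1 hi)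
    rw [map_smul, this, smul_zero]
  obtain ⟨n', hn', a, ha0, ha, haM⟩ :=
    exists_flat_coefficients hε hε1 hsq n (max ‖g‖ ‖J w‖)
  have : Nonempty (Finset.Ico n n') := ⟨⟨n, Finset.mem_Ico.2 ⟨le_rfl, hn'⟩⟩⟩
  obtain ⟨y, ys, hyy, hxy, hyx, hynorm, hysum, -⟩ :=
    exists_block (not_finiteDimensional_strongDual hX) (fun k : Fin n => xs k)
    (fun k : Fin n => J (x k)) (x₀ := g) (x₀s := J w) (fun k => hg k k.2)
    (fun k => h.apply_sub_sum v k.2) hgw (I := Finset.Ico n n') (ε := fun i => ε i)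
    (a := fun i => a i) (fun i => hε i) (fun i => hε1 i)
    ((Finset.sum_coe_sort (Finset.Ico n n') fun i => a i ^ 2).trans ha)
    (fun i => by
      rw [abs_of_pos (ha0 i)]
      exact (mul_le_mul_of_nonneg_left (le_max_left _ _) (ha0 i).le).trans (haM i).1)
    (fun i => by
      rw [abs_of_pos (ha0 i)]
      exact (mul_le_mul_of_nonneg_left (le_max_right _ _) (ha0 i).le).trans (haM i).1)
  have hy0 : ∀ i, 0 < ‖y i‖ := fun i => norm_pos_iff.2 fun h0 => by
    have := hyy i i
    rw [h0, map_zero, if_pos rfl] at this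
    exact zero_ne_one this
  have hz : ∀ i, ∃ z : X, (∀ k : Fin n, xs k z = 0) ∧ (∀ j, y j z = if i = j then 1 else 0) ∧
      ‖z‖ * ‖y i‖ ≤ 1 + ε i := fun i => by
    obtain ⟨z, hz1, hz2⟩ := exists_apply_eq_bidual_apply
      (Sum.elim (fun k : Fin n => xs k) y) (ys i) (r := (1 + ε i) / ‖y i‖)
      ((lt_div_iff₀ (hy0 i)).2 (by rw [mul_comm]; exact hynorm i))
    refine ⟨z, fun k => (hz1 (Sum.inl k)).trans (hyx k i), fun j => (hz1 (Sum.inr j)).trans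
      (hyy i j), ((lt_div_iff₀ (hy0 i)).1 hz2).le⟩
  choose z hz1 hz2 hz3 using hz
  exact ⟨n', _, _, hn', fun i hi => ⟨splice_of_lt z x hi, splice_of_lt y xs hi⟩,
    h.splice (fun i j => by rw [hz2 j i]; simp only [eq_comm]) (fun k hk i => hz1 i ⟨k, hk⟩)
      (fun k hk i => hxy ⟨k, hk⟩ i) hz3,
    mem_span_splice hn'.le hf one_ne_zero (hysum.trans (one_smul ℝ g).symm)⟩

/-- Extend a finite biorthogonal system so that it captures a given vector and a given
functional and carries a flat vector. -/
theorem IsBiorthogonalBelow.exists_extension (hX : ¬ FiniteDimensional ℝ X)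
    (hε : ∀ i, 0 < ε i) (hε1 : ∀ i, ε i ≤ 1) (hsq : ¬ Summable fun n => ε n ^ 2)
    (h : IsBiorthogonalBelow ε n x xs) (v : X) (f : X →L[ℝ] ℝ) {τ : ℝ} (hτ : 0 < τ) :
    ∃ n' z zs, n < n' ∧ (∀ i < n, z i = x i ∧ zs i = xs i) ∧
      IsBiorthogonalBelow ε n' z zs ∧ v ∈ Submodule.span ℝ (z '' Set.Iio n') ∧
      f ∈ Submodule.span ℝ (zs '' Set.Iio n') ∧ ∃ m ≤ n', HasFlatVector τ m z := by
  obtain ⟨n₁, x₁, xs₁, hn₁, heq₁, h₁, hv, hflat⟩ :=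
    h.exists_extension_mem_span hX hε hε1 hsq v hτ
  obtain ⟨n₂, x₂, xs₂, hn₂, heq₂, h₂, hf⟩ := h₁.exists_extension_dual_mem_span hX hε hε1 hsq f
  refine ⟨n₂, x₂, xs₂, hn₁.trans hn₂, fun i hi => ?_, h₂, ?_, hf, n₁, hn₂.le,
    hflat.congr fun i hi => (heq₂ i hi).1⟩
  · have h3 := heq₂ i (hi.trans hn₁)
    exact ⟨h3.1.trans (heq₁ i hi).1, h3.2.trans (heq₁ i hi).2⟩
  · refine Submodule.span_mono ?_ hv
    rintro _ ⟨k, hk, rfl⟩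
    exact ⟨k, lt_trans hk hn₂, (heq₂ k hk).1⟩

/-- An infinite biorthogonal system capturing countably many vectors and functionals and carrying
flat vectors with arbitrarily small sum. -/
theorem exists_biorthogonal_hasFlatVector (hX : ¬ FiniteDimensional ℝ X)
    (hε : ∀ i, 0 < ε i) (hε1 : ∀ i, ε i ≤ 1) (hsq : ¬ Summable fun n => ε n ^ 2)
    (d : ℕ → X) (f : ℕ → X →L[ℝ] ℝ) {τ : ℕ → ℝ} (hτ : ∀ j, 0 < τ j) :
    ∃ (x : ℕ → X) (xs : ℕ → X →L[ℝ] ℝ), (∀ n, IsBiorthogonalBelow ε n x xs) ∧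
      ∀ j, d j ∈ Submodule.span ℝ (Set.range x) ∧ f j ∈ Submodule.span ℝ (Set.range xs) ∧
        ∃ m, HasFlatVector (τ j) m x := by
  let State := {s : ℕ × (ℕ → X) × (ℕ → X →L[ℝ] ℝ) // IsBiorthogonalBelow ε s.1 s.2.1 s.2.2}
  have hstep : ∀ (j : ℕ) (s : State), ∃ t : State, s.1.1 < t.1.1 ∧
      (∀ i < s.1.1, t.1.2.1 i = s.1.2.1 i ∧ t.1.2.2 i = s.1.2.2 i) ∧
      d j ∈ Submodule.span ℝ (t.1.2.1 '' Set.Iio t.1.1) ∧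
      f j ∈ Submodule.span ℝ (t.1.2.2 '' Set.Iio t.1.1) ∧
      ∃ m ≤ t.1.1, HasFlatVector (τ j) m t.1.2.1 := fun j s => by
    obtain ⟨n', x', xs', h1, h2, h3, h4⟩ := s.2.exists_extension hX hε hε1 hsq (d j) (f j) (hτ j)
    exact ⟨⟨(n', x', xs'), h3⟩, h1, h2, h4⟩
  choose F hF1 hF2 hF3 hF4 hF5 using hstep
  let S : ℕ → State := Nat.rec
    ⟨(0, fun _ => 0, fun _ => 0), ⟨fun i hi => absurd hi (Nat.not_lt_zero i),
      fun i hi => absurd hi (Nat.not_lt_zero i)⟩⟩ F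
  have hmono : StrictMono fun j => (S j).1.1 := strictMono_nat_of_lt_succ fun j => hF1 j (S j)
  have hagree : ∀ j k, j ≤ k → ∀ i < (S j).1.1,
      (S k).1.2.1 i = (S j).1.2.1 i ∧ (S k).1.2.2 i = (S j).1.2.2 i := by
    intro j k hjk
    induction k, hjk using Nat.le_induction with
    | base => exact fun i _ => ⟨rfl, rfl⟩
    | succ k hjk ih =>
      intro i hi
      have h1 := hF2 k (S k) i (lt_of_lt_of_le hi (hmono.monotone hjk))
      exact ⟨h1.1.trans (ih i hi).1, h1.2.trans (ih i hi).2⟩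
  let x : ℕ → X := fun i => (S (i + 1)).1.2.1 i
  let xs : ℕ → X →L[ℝ] ℝ := fun i => (S (i + 1)).1.2.2 i
  have hx : ∀ j, ∀ i < (S j).1.1, x i = (S j).1.2.1 i ∧ xs i = (S j).1.2.2 i := by
    intro j i hi
    rcases le_total j (i + 1) with hj | hj
    · exact hagree j (i + 1) hj i hi
    · have h1 := hagree (i + 1) j hj i (lt_of_lt_of_le i.lt_succ_self (hmono.le_apply))
      exact ⟨h1.1.symm, h1.2.symm⟩
  refine ⟨x, xs, fun n => ⟨fun i hi j hj => ?_, fun i hi => ?_⟩, fun j => ⟨?_, ?_, ?_⟩⟩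
  · have hi' := lt_of_lt_of_le hi (hmono.le_apply (x := n))
    have hj' := lt_of_lt_of_le hj (hmono.le_apply (x := n))
    rw [(hx n i hi').2, (hx n j hj').1]
    exact (S n).2.apply_eq i hi' j hj'
  · have hi' := lt_of_lt_of_le hi (hmono.le_apply (x := n))
    rw [(hx n i hi').1, (hx n i hi').2]
    exact (S n).2.norm_mul_le i hi'
  · refine Submodule.span_mono ?_ (hF3 j (S j))
    rintro _ ⟨k, hk, rfl⟩
    exact ⟨k, (hx (j + 1) k hk).1⟩
  · refine Submodule.span_mono ?_ (hF4 j (S j))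
    rintro _ ⟨k, hk, rfl⟩
    exact ⟨k, (hx (j + 1) k hk).2⟩
  · obtain ⟨m, hm, hflat⟩ := hF5 j (S j)
    exact ⟨m, hflat.congr fun i hi => (hx (j + 1) i (lt_of_lt_of_le hi hm)).1⟩

theorem exists_sum_range_mem_Icc {b : ℕ → ℝ} (hb : ∀ i, b i ≤ 1 / 2) {N : ℕ}
    (hN : ∑ i ∈ Finset.range N, b i = 1) :
    ∃ m ≤ N, 1 / 4 ≤ ∑ i ∈ Finset.range m, b i ∧ ∑ i ∈ Finset.range m, b i ≤ 3 / 4 := by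
  classical
  have hex : ∃ m, 1 / 4 ≤ ∑ i ∈ Finset.range m, b i := ⟨N, by rw [hN]; norm_num⟩
  refine ⟨Nat.find hex, Nat.find_min' hex (by rw [hN]; norm_num), Nat.find_spec hex, ?_⟩
  obtain ⟨k, hk⟩ : ∃ k, Nat.find hex = k + 1 := Nat.exists_eq_succ_of_ne_zero fun h0 => by
    have := Nat.find_spec hex
    rw [h0] at this
    norm_num at this
  have hlt := Nat.find_min hex (m := k) (by omega)
  rw [hk, Finset.sum_range_succ]
  linarith [hb k]

theorem sum_range_comp_perm {E : Type*} [AddCommMonoid E] {g : ℕ → E}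
    (hg : ∀ i, n ≤ i → g i = 0) (σ : Equiv.Perm ℕ) (m : ℕ) :
    ∑ i ∈ Finset.range m, g (σ i) =
      ∑ i ∈ (Finset.range n).filter fun i => σ.symm i < m, g i := by
  have hmap : ∑ i ∈ Finset.range m, g (σ i) = ∑ i ∈ (Finset.range m).map σ.toEmbedding, g i :=
    (Finset.sum_map (Finset.range m) σ.toEmbedding g).symm
  rw [hmap]
  refine (Finset.sum_subset (fun i hi => ?_) fun i hi hi' => hg i ?_).symm
  · simp only [Finset.mem_map_equiv, Finset.mem_range]
    exact (Finset.mem_filter.1 hi).2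
  · simp only [Finset.mem_map_equiv, Finset.mem_range] at hi
    by_contra! hlt
    exact hi' (Finset.mem_filter.2 ⟨Finset.mem_range.2 hlt, hi⟩)

/-- A flat vector forces the partial-sum constant of every reordering to be large. -/
theorem HasFlatVector.le_mul_of_partial_sum_bound {τ : ℝ} (h : HasFlatVector τ n x)
    (σ : Equiv.Perm ℕ) {C : ℝ} (hC0 : 0 ≤ C)
    (hC : ∀ m n : ℕ, m ≤ n → ∀ a : ℕ → ℝ, ‖∑ i ∈ Finset.range m, a i • x (σ i)‖ ≤
      C * ‖∑ i ∈ Finset.range n, a i • x (σ i)‖) : 3 / 32 ≤ C * τ := by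
  classical
  obtain ⟨a, h0, h1, h2, h3, h4⟩ := h
  obtain ⟨N, hN⟩ : ∃ N, (Finset.range n).image σ.symm ⊆ Finset.range N :=
    Finset.exists_nat_subset_range _
  have hfull : ((Finset.range n).filter fun i => σ.symm i < N) = Finset.range n :=
    Finset.filter_true_of_mem fun i hi =>
      Finset.mem_range.1 (hN (Finset.mem_image_of_mem _ hi))
  have hsq := sum_range_comp_perm (n := n) (g := fun i => a i ^ 2)
    (fun i hi => by simp [h0 i hi]) σ
  have hvec := sum_range_comp_perm (n := n) (g := fun i => a i • x i)
    (fun i hi => by simp [h0 i hi]) σ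
  obtain ⟨m, hm, hlo, hhi⟩ := exists_sum_range_mem_Icc (b := fun i => a (σ i) ^ 2)
    (fun i => h2 (σ i)) (N := N) (by rw [hsq N, hfull, h1])
  have h5 := hC m N hm fun i => a (σ i)
  rw [hvec m, hvec N, hfull] at h5
  have h6 := h4 ((Finset.range n).filter fun i => σ.symm i < m) (Finset.filter_subset _ _)
  rw [hsq m] at hlo hhi
  have h7 := mul_le_mul_of_nonneg_left h3 hC0
  nlinarith

theorem not_summable_min_one_sq {ε : ℕ → ℝ} (hsq : ¬ Summable fun n => ε n ^ 2) :
    ¬ Summable fun n => min (ε n) 1 ^ 2 := fun h => by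
  have h1 := h.tendsto_atTop_zero.eventually_lt_const (zero_lt_one' ℝ)
  refine hsq ((summable_congr_atTop ?_).1 h)
  filter_upwards [h1] with n hn
  rcases le_total (ε n) 1 with h2 | h2
  · rw [min_eq_left h2]
  · rw [min_eq_right h2] at hn
    norm_num at hn

end Extension

/-- In any infinite-dimensional separable real Banach space `X`, for any
positive sequence `(ε n)` with `n · ε n → ∞` and `Σ ε n ² = ∞`, there is a
`(1+ε n)`-bounded Markushevich basis of `X` such that for every permutation `σ` of `ℕ`
no constant `C` gives a uniform partial-sum bound; in particular no permutation of the
basis is equivalent to a Schauder basis of `X`. -/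
theorem exists_bounded_Mbasis_no_permutation_Schauder
    (X : Type*) [NormedAddCommGroup X] [NormedSpace ℝ X] [CompleteSpace X]
    [TopologicalSpace.SeparableSpace X] (hinf : ¬ FiniteDimensional ℝ X)
    (ε : ℕ → ℝ) (hε : ∀ n, 0 < ε n)
    (hlim : Filter.Tendsto (fun n : ℕ => (n : ℝ) * ε n) Filter.atTop Filter.atTop)
    (hsq : ¬ Summable (fun n => (ε n) ^ 2)) :
    ∃ (x : ℕ → X) (xs : ℕ → X →L[ℝ] ℝ),
      (∀ m n, xs m (x n) = if m = n then 1 else 0) ∧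
      (Submodule.span ℝ (Set.range x)).topologicalClosure = ⊤ ∧
      (∀ v : X, (∀ n, xs n v = 0) → v = 0) ∧
      (∀ n, ‖x n‖ * ‖xs n‖ ≤ 1 + ε n) ∧
      (∀ σ : Equiv.Perm ℕ, ¬ ∃ C : ℝ,
        ∀ m n : ℕ, m ≤ n → ∀ a : ℕ → ℝ,
          ‖∑ i ∈ Finset.range m, a i • x (σ i)‖ ≤
            C * ‖∑ i ∈ Finset.range n, a i • x (σ i)‖) := by
  let e : ℕ → ℝ := fun n => min (ε n) 1
  let d : ℕ → X := TopologicalSpace.denseSeq X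
  have hd : DenseRange d := TopologicalSpace.denseRange_denseSeq X
  choose f hf1 hf2 using fun j => exists_dual_vector'' ℝ (d j)
  obtain ⟨x, xs, hx, hcap⟩ := exists_biorthogonal_hasFlatVector hinf (ε := e)
    (fun i => lt_min (hε i) one_pos) (fun i => min_le_right _ _) (not_summable_min_one_sq hsq)
    d f (τ := fun j => 1 / ((j : ℝ) + 1)) fun j => Nat.one_div_pos_of_nat
  refine ⟨x, xs, fun m n => ?_, ?_, fun v hv => ?_, fun n => ?_, fun σ => ?_⟩
  · exact (hx (max m n + 1)).apply_eq m (Nat.lt_succ_of_le (le_max_left m n)) n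
      (Nat.lt_succ_of_le (le_max_right m n))
  · rw [← Submodule.dense_iff_topologicalClosure_eq_top]
    refine hd.mono ?_
    rintro _ ⟨j, rfl⟩
    exact (hcap j).1
  · have hfv : ∀ j, f j v = 0 := fun j => by
      have hle : Submodule.span ℝ (Set.range xs) ≤
          LinearMap.ker (NormedSpace.inclusionInDoubleDual ℝ X v).toLinearMap := by
        refine Submodule.span_le.2 ?_
        rintro _ ⟨n, rfl⟩
        exact hv n
      exact hle (hcap j).2.1
    by_contra hv0
    obtain ⟨j, hj⟩ := hd.exists_dist_lt v (half_pos (norm_pos_iff.2 hv0))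
    rw [dist_eq_norm] at hj
    have h1 : ‖d j‖ ≤ ‖v - d j‖ := by
      have h2 := (f j).le_of_opNorm_le (hf1 j) (d j - v)
      rw [map_sub, hfv j, sub_zero, hf2 j, one_mul, norm_sub_rev] at h2
      simpa using h2
    have h3 := norm_le_norm_add_norm_sub (d j) v
    rw [norm_sub_rev] at h3
    linarith
  · exact ((hx (n + 1)).norm_mul_le n n.lt_succ_self).trans
      (by gcongr; exact min_le_left _ _)
  · rintro ⟨C, hC⟩
    obtain ⟨j, hj⟩ := exists_nat_gt (11 * |C|)
    obtain ⟨m, hm⟩ := (hcap j).2.2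
    have h1 := hm.le_mul_of_partial_sum_bound σ (abs_nonneg C) fun m n hmn a =>
      (hC m n hmn a).trans (mul_le_mul_of_nonneg_right (le_abs_self C) (norm_nonneg _))
    rw [mul_one_div, le_div_iff₀ (by positivity)] at h1
    linarith [abs_nonneg C]
end
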